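/- Let t_0, t_1 > 0 and 1 < B < ∞ be real numbers, and let 𝒟_2^t(B) = { x ∈ (0,1) irrational : a_n(x)^{t_0}·a_{n+1}(x)^{t_1} ≥ B^n for infinitely many n ∈ ℕ }. Then dim_H 𝒟_2^t(B) = inf{ s ∈ [0,1] : limsup_{n→∞} (1/n)·log Σ_{(a_1,…,a_n) ∈ (ℕ≥1)^n} B^{−n·f_{t_0,t_1}(s)}·q_n(a_1,…,a_n)^{−2s} ≤ 0 } (the limsup taken in the extended reals), where f_{t_0}(s) = s/t_0 and f_{t_0,t_1}(s) = s·f_{t_0}(s) / ( t_1·( f_{t_0}(s) + max{0, s/t_1 − (2s−1)/t_0} ) ) for s > 0, with f_{t_0,t_1}(0) = 0. -/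

import Mathlib

open Filter MeasureTheory Set

/-- The Gauss map `T(x) = 1/x - ⌊1/x⌋`. -/
noncomputable def gaussMap (x : ℝ) : ℝ := 1 / x - (⌊1 / x⌋ : ℤ)

/-- The `n`-th partial quotient `a_n(x)` (for `n ≥ 1`) of the continued
fraction expansion of `x`: `a_n(x) = ⌊1 / T^{n-1}(x)⌋`. -/
noncomputable def pq (x : ℝ) (n : ℕ) : ℕ := ⌊1 / (gaussMap^[n - 1] x)⌋₊

/-- The continuant `q_n(a_1, …, a_n)`: `q_0 = 1`, `q_1 = a_1`,
`q_k = a_k q_{k-1} + q_{k-2}`. -/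
def contQ : (n : ℕ) → (Fin n → ℕ) → ℕ
  | 0, _ => 1
  | 1, a => a 0
  | (n + 2), a =>
      a (Fin.last (n + 1)) * contQ (n + 1) (Fin.init a) +
        contQ n (Fin.init (Fin.init a))

/-- `s_B`: the Wang–Wu pressure exponent. -/
noncomputable def sExp (B : ℝ) : ℝ :=
  sInf {s : ℝ | 0 ≤ s ∧
    Filter.atTop.limsup (fun n : ℕ =>
      (((n : ℝ)⁻¹ : ℝ) : EReal) * ENNReal.log (∑' a : Fin n → ℕ+,
        ENNReal.ofReal ((B ^ n * ((contQ n fun i => (a i : ℕ)) : ℝ) ^ 2) ^ (-s)))) ≤ 0}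

/-- `g_{B₁,B₂}`: the two-parameter pressure exponent. -/
noncomputable def gExp (B₁ B₂ : ℝ) : ℝ :=
  sInf {s : ℝ | 0 ≤ s ∧
    Filter.atTop.limsup (fun n : ℕ =>
      (((n : ℝ)⁻¹ : ℝ) : EReal) * ENNReal.log (∑' a : Fin n → ℕ+,
        ENNReal.ofReal (B₂ ^ ((1 - s) * (n : ℝ)) *
          (B₁ ^ n * ((contQ n fun i => (a i : ℕ)) : ℝ) ^ 2) ^ (-s)))) ≤ 0}

/-- `f_{t₀,t₁}(s) = s f_{t₀}(s) / (t₁ (f_{t₀}(s) + max{0, s/t₁ - (2s-1)/t₀}))`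
where `f_{t₀}(s) = s / t₀`, with `f_{t₀,t₁}(0) = 0`. -/
noncomputable def fWeighted (t₀ t₁ s : ℝ) : ℝ :=
  if s = 0 then 0
  else s * (s / t₀) / (t₁ * (s / t₀ + max 0 (s / t₁ - (2 * s - 1) / t₀)))

/-!
Let `x` have infinitely many `n` with `aₙ^t₀ * aₙ₊₁^t₁ ≥ B^n`, and split at a threshold
`aₙ ≈ B^(κ n)`. If `aₙ` is at least the threshold, then `x` lies in a small interval inside the
cylinder of `(a₁, …, aₙ₋₁)`; otherwise `aₙ` is small, `aₙ₊₁` is forced to be large, and the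
intervals are counted over the choices of `aₙ`. Both families cost the same `B^(-n f(s))` per
cylinder when `κ` is chosen to balance them, and this is where `fWeighted` comes from; the upper
bound is then the Hausdorff–Cantelli lemma.

For the lower bound, positivity of the pressure at `s` provides a finite set of words of one length
(free blocks) whose `s`-weights sum to a large constant. Put free blocks one after another,
interrupted at sparse times by marker blocks containing digits `a ≈ B^(κ n)`, `b ≈ B^(δ n)` with
`κ t₀ + δ t₁ = 1`. A marker is inserted greedily, as soon as the mass accumulated from the free
blocks pays for its loss `B^(n f(s))`. The resulting Cantor set lies in the set under consideration
and carries a measure satisfying the mass distribution principle with exponent `s`.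
-/

/-! ### Finite continued fraction words -/

/-- A finite word of partial quotients. -/
abbrev CFWord := List ℕ+

namespace CFWord

/-- The product of the matrices `!![0, 1; 1, a]` along a word. Its columns hold the last two
convergents, as (numerator, denominator). -/
def mat (l : CFWord) : Matrix (Fin 2) (Fin 2) ℕ :=
  (l.map fun a : ℕ+ => !![0, 1; 1, (a : ℕ)]).prod

/-- The numerator of the continued fraction `[a₁, …, aₙ]`. -/
def num (l : CFWord) : ℕ := mat l 0 1

/-- The denominator of the continued fraction `[a₁, …, aₙ]`, that is, the continuant of the
word. -/
def denom (l : CFWord) : ℕ := mat l 1 1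

/-- The numerator of `[a₁, …, aₙ₋₁]`, equal to `1` on the empty word. -/
def prevNum (l : CFWord) : ℕ := mat l 0 0

/-- The denominator of `[a₁, …, aₙ₋₁]`, equal to `0` on the empty word. -/
def prevDenom (l : CFWord) : ℕ := mat l 1 0

/-- The inverse branch `y ↦ [a₁, …, aₙ + y]` of the `n`-th iterate of the Gauss map. -/
noncomputable def branch (l : CFWord) (y : ℝ) : ℝ := l.foldr (fun a z => ((a : ℝ) + z)⁻¹) y

lemma mat_append (l l' : CFWord) : mat (l ++ l') = mat l * mat l' := by
  simp [mat]

@[simp] lemma num_nil : num [] = 0 := rfl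
@[simp] lemma denom_nil : denom [] = 1 := rfl
@[simp] lemma prevNum_nil : prevNum [] = 1 := rfl
@[simp] lemma prevDenom_nil : prevDenom [] = 0 := rfl

@[simp] lemma num_cons (a : ℕ+) (l : CFWord) : num (a :: l) = denom l := by
  simp [num, denom, mat, Matrix.mul_apply]

@[simp] lemma denom_cons (a : ℕ+) (l : CFWord) : denom (a :: l) = a * denom l + num l := by
  simp [num, denom, mat, Matrix.mul_apply, add_comm]

@[simp] lemma prevNum_cons (a : ℕ+) (l : CFWord) : prevNum (a :: l) = prevDenom l := by
  simp [prevNum, prevDenom, mat, Matrix.mul_apply]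

@[simp] lemma prevDenom_cons (a : ℕ+) (l : CFWord) :
    prevDenom (a :: l) = a * prevDenom l + prevNum l := by
  simp [prevNum, prevDenom, mat, Matrix.mul_apply, add_comm]

lemma denom_append (l l' : CFWord) :
    denom (l ++ l') = denom l * denom l' + prevDenom l * num l' := by
  simp [denom, prevDenom, num, mat_append, Matrix.mul_apply, add_comm]

lemma denom_concat (l : CFWord) (a : ℕ+) : denom (l ++ [a]) = denom l * a + prevDenom l := by
  simp [denom_append]

lemma prevDenom_concat (l : CFWord) (a : ℕ+) : prevDenom (l ++ [a]) = denom l := by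
  simp [denom, prevDenom, mat, Matrix.mul_apply]

lemma num_le_denom (l : CFWord) : num l ≤ denom l := by
  induction l with
  | nil => simp
  | cons a l _ =>
    simpa using (Nat.le_mul_of_pos_left _ a.pos).trans (Nat.le_add_right _ _)

lemma prevDenom_le_denom (l : CFWord) : prevDenom l ≤ denom l := by
  induction l using List.reverseRecOn with
  | nil => simp
  | append_singleton l a _ =>
    rw [prevDenom_concat, denom_concat]
    exact (Nat.le_mul_of_pos_right _ a.pos).trans (Nat.le_add_right _ _)

lemma denom_pos (l : CFWord) : 0 < denom l := by
  induction l with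
  | nil => simp
  | cons a l ih => rw [denom_cons]; positivity

lemma one_le_denom (l : CFWord) : (1 : ℝ) ≤ denom l := by exact_mod_cast denom_pos l

lemma denom_mul_denom_le (l l' : CFWord) : denom l * denom l' ≤ denom (l ++ l') := by
  simp [denom_append]

lemma denom_append_le (l l' : CFWord) : denom (l ++ l') ≤ 2 * (denom l * denom l') := by
  have := Nat.mul_le_mul (prevDenom_le_denom l) (num_le_denom l')
  rw [denom_append]
  lia

lemma two_pow_length_le_denom_sq : ∀ l : CFWord, 2 ^ l.length ≤ 2 * denom l ^ 2
  | [] => by simp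
  | [a] => by
    have := a.pos
    simp only [List.length_singleton, denom_cons, denom_nil, num_nil]
    nlinarith
  | a :: b :: l => by
    have ih := two_pow_length_le_denom_sq l
    have double : 2 * denom l ≤ denom (a :: b :: l) := by
      have hab : 1 ≤ (a : ℕ) * b := Nat.mul_pos a.pos b.pos
      have := Nat.mul_le_mul hab (le_refl (denom l))
      simp only [denom_cons, num_cons]
      nlinarith
    have := Nat.pow_le_pow_left double 2
    simp only [List.length_cons, pow_succ] at *
    nlinarith

lemma contQ_eq_denom_ofFn : ∀ (n : ℕ) (a : Fin n → ℕ+),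
    (contQ n fun i => (a i : ℕ)) = denom (List.ofFn a)
  | 0, a => by simp [contQ]
  | 1, a => by simp [contQ]
  | n + 2, a => by
    have ofFn_init (m : ℕ) (b : Fin (m + 1) → ℕ+) :
        List.ofFn b = List.ofFn (Fin.init b) ++ [b (Fin.last m)] := by
      rw [List.ofFn_succ' b, List.concat_eq_append]; rfl
    have prev : prevDenom (List.ofFn (Fin.init a)) = denom (List.ofFn (Fin.init (Fin.init a))) := by
      rw [ofFn_init n, prevDenom_concat]
    rw [ofFn_init, denom_concat, prev, mul_comm, ← contQ_eq_denom_ofFn (n + 1),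
      ← contQ_eq_denom_ofFn n]
    rfl

@[simp] lemma branch_nil (y : ℝ) : branch [] y = y := rfl

lemma branch_cons (a : ℕ+) (l : CFWord) (y : ℝ) : branch (a :: l) y = (a + branch l y)⁻¹ := rfl

lemma branch_append (l l' : CFWord) (y : ℝ) : branch (l ++ l') y = branch l (branch l' y) := by
  simp [branch]

lemma one_le_coe (a : ℕ+) : (1 : ℝ) ≤ a := by exact_mod_cast a.pos

lemma branch_mem_Icc (l : CFWord) {y : ℝ} (hy : y ∈ Icc (0 : ℝ) 1) :
    branch l y ∈ Icc (0 : ℝ) 1 := by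
  induction l with
  | nil => exact hy
  | cons a l ih =>
    have := one_le_coe a
    rw [branch_cons]
    exact ⟨inv_nonneg.2 (by linarith [ih.1]), inv_le_one_of_one_le₀ (by linarith [ih.1])⟩

lemma branch_mem_Ioo (l : CFWord) {y : ℝ} (hy : y ∈ Ioo (0 : ℝ) 1) :
    branch l y ∈ Ioo (0 : ℝ) 1 := by
  induction l with
  | nil => exact hy
  | cons a l ih =>
    have := one_le_coe a
    rw [branch_cons]
    exact ⟨inv_pos.2 (by linarith [ih.1]), inv_lt_one_of_one_lt₀ (by linarith [ih.1])⟩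

lemma branch_continuousOn (l : CFWord) : ContinuousOn (branch l) (Icc 0 1) := by
  induction l with
  | nil => exact continuousOn_id
  | cons a l ih =>
    refine (continuousOn_const.add ih).inv₀ fun y hy => ?_
    exact (add_pos_of_pos_of_nonneg (by positivity) (branch_mem_Icc l hy).1).ne'

lemma branch_mul_eq (l : CFWord) {y : ℝ} (hy : y ∈ Icc (0 : ℝ) 1) :
    branch l y * (denom l + prevDenom l * y) = num l + prevNum l * y := by
  induction l with
  | nil => simp
  | cons a l ih =>
    have hne : (a : ℝ) + branch l y ≠ 0 := by
      linarith [one_le_coe a, (branch_mem_Icc l hy).1]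
    rw [branch_cons, inv_mul_eq_iff_eq_mul₀ hne]
    push_cast [denom_cons, prevDenom_cons, num_cons, prevNum_cons]
    linear_combination -ih

lemma abs_branch_sub_mul_eq (l : CFWord) {y z : ℝ} (hy : y ∈ Icc (0 : ℝ) 1)
    (hz : z ∈ Icc (0 : ℝ) 1) :
    |branch l y - branch l z| *
      ((denom l + prevDenom l * y) * (denom l + prevDenom l * z)) = |y - z| := by
  induction l with
  | nil => simp
  | cons a l ih =>
    have pos {x : ℝ} (hx : x ∈ Icc (0 : ℝ) 1) : 0 < (a : ℝ) + branch l x := by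
      linarith [one_le_coe a, (branch_mem_Icc l hx).1]
    have factor {x : ℝ} (hx : x ∈ Icc (0 : ℝ) 1) :
        (denom (a :: l) : ℝ) + prevDenom (a :: l) * x =
          (denom l + prevDenom l * x) * (a + branch l x) := by
      push_cast [denom_cons, prevDenom_cons]
      linear_combination -branch_mul_eq l hx
    have hyp := pos hy
    have hzp := pos hz
    rw [factor hy, factor hz, ← ih, branch_cons, branch_cons, inv_sub_inv hyp.ne' hzp.ne',
      add_sub_add_left_eq_sub, abs_div, abs_sub_comm, abs_of_pos (mul_pos hyp hzp)]
    field_simp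

lemma abs_branch_sub_le (l : CFWord) {y z : ℝ} (hy : y ∈ Icc (0 : ℝ) 1)
    (hz : z ∈ Icc (0 : ℝ) 1) : |branch l y - branch l z| ≤ |y - z| / (denom l : ℝ) ^ 2 := by
  have := one_le_denom l
  rw [le_div_iff₀ (by positivity), ← abs_branch_sub_mul_eq l hy hz, sq]
  have := hy.1
  have := hz.1
  gcongr <;> exact le_add_of_nonneg_right (by positivity)

lemma abs_sub_le_abs_branch_sub_mul (l : CFWord) {y z : ℝ} (hy : y ∈ Icc (0 : ℝ) 1)
    (hz : z ∈ Icc (0 : ℝ) 1) :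
    |y - z| ≤ |branch l y - branch l z| * (4 * (denom l : ℝ) ^ 2) := by
  have hprev : (prevDenom l : ℝ) ≤ denom l := by exact_mod_cast prevDenom_le_denom l
  have le_two {x : ℝ} (hx : x ∈ Icc (0 : ℝ) 1) :
      (denom l : ℝ) + prevDenom l * x ≤ 2 * denom l := by
    linarith [mul_le_of_le_one_right (by positivity : (0 : ℝ) ≤ prevDenom l) hx.2]
  rw [← abs_branch_sub_mul_eq l hy hz,
    show (4 : ℝ) * (denom l : ℝ) ^ 2 = (2 * denom l) * (2 * denom l) by ring]
  have := hz.1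
  gcongr <;> apply le_two <;> assumption

lemma branch_zero (l : CFWord) : branch l 0 = num l / denom l := by
  have := one_le_denom l
  rw [eq_div_iff (by positivity)]
  simpa using branch_mul_eq l (y := 0) (by simp)

/-! ### The Gauss map on the branches -/

lemma one_div_branch_cons (a : ℕ+) (l : CFWord) (y : ℝ) :
    1 / branch (a :: l) y = a + branch l y := by
  simp [branch_cons]

lemma floor_one_div_branch_cons (a : ℕ+) {l : CFWord} {y : ℝ} (hy : branch l y ∈ Ioo (0 : ℝ) 1) :
    ⌊1 / branch (a :: l) y⌋₊ = a := by
  rw [one_div_branch_cons, add_comm, Nat.floor_add_natCast hy.1.le, Nat.floor_eq_zero.2 hy.2,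
    zero_add]

lemma gaussMap_branch_cons (a : ℕ+) {l : CFWord} {y : ℝ} (hy : branch l y ∈ Ioo (0 : ℝ) 1) :
    gaussMap (branch (a :: l) y) = branch l y := by
  rw [gaussMap, one_div_branch_cons, Int.floor_natCast_add, Int.floor_eq_zero_iff.2 ⟨hy.1.le, hy.2⟩]
  simp

lemma gaussMap_iterate_branch (l : CFWord) {y : ℝ} (hy : y ∈ Ioo (0 : ℝ) 1) :
    gaussMap^[l.length] (branch l y) = y := by
  induction l with
  | nil => rfl
  | cons a l ih =>
    rw [List.length_cons, Function.iterate_succ_apply, gaussMap_branch_cons a (branch_mem_Ioo l hy),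
      ih]

lemma pq_branch (l l' : CFWord) (a : ℕ+) {y : ℝ} (hy : y ∈ Ioo (0 : ℝ) 1) :
    pq (branch (l ++ a :: l') y) (l.length + 1) = a := by
  rw [pq, Nat.add_sub_cancel, branch_append, gaussMap_iterate_branch l (branch_mem_Ioo _ hy),
    floor_one_div_branch_cons a (branch_mem_Ioo l' hy)]

/-- Two distinct reduced fractions with denominators `d` and `q` are at least `1 / (d q)` apart,
while `branch l` maps `[0, 1]` onto an interval of length at most `1 / (denom l) ^ 2`. -/
lemma irrational_of_forall_exists_branch {x : ℝ}
    (h : ∀ M : ℕ, ∃ l y, y ∈ Ioo (0 : ℝ) 1 ∧ x = branch l y ∧ M ≤ denom l) : Irrational x := by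
  rintro ⟨r, rfl⟩
  obtain ⟨l, y, hy, hx, hM⟩ := h (r.den + 1)
  have hq := one_le_denom l
  have : (0 : ℝ) < r.den := by exact_mod_cast r.den_pos
  have hy' : y ∈ Icc (0 : ℝ) 1 := Ioo_subset_Icc_self hy
  have h0 : (0 : ℝ) ∈ Icc (0 : ℝ) 1 := by simp
  have near : |(r : ℝ) - num l / denom l| ≤ y / (denom l : ℝ) ^ 2 := by
    simpa [← hx, branch_zero, abs_of_pos hy.1] using abs_branch_sub_le l hy' h0
  have ne : y ≤ |(r : ℝ) - num l / denom l| * (4 * (denom l : ℝ) ^ 2) := by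
    simpa [← hx, branch_zero, abs_of_pos hy.1] using abs_sub_le_abs_branch_sub_mul l hy' h0
  have diff : (r : ℝ) - num l / denom l =
      ((r.num * denom l - num l * r.den : ℤ) : ℝ) / (r.den * denom l) := by
    rw [Rat.cast_def]; push_cast; field_simp
  have apart : 1 / ((r.den : ℝ) * denom l) ≤ |(r : ℝ) - num l / denom l| := by
    rw [diff] at ne ⊢
    have hne : (r.num * denom l - num l * r.den : ℤ) ≠ 0 := by
      refine fun h => hy.1.not_ge ?_
      simpa [h] using ne
    rw [abs_div, abs_of_pos (by positivity : (0 : ℝ) < r.den * denom l)]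
    gcongr
    exact_mod_cast Int.one_le_abs hne
  have hlt : y / (denom l : ℝ) ^ 2 < 1 / (denom l : ℝ) ^ 2 := by gcongr; exact hy.2
  have := (apart.trans near).trans_lt hlt
  rw [one_div_lt_one_div (by positivity) (by positivity), sq, mul_lt_mul_iff_left₀ (by positivity)]
    at this
  have : denom l < r.den := by exact_mod_cast this
  lia

lemma eq_of_branch_eq_branch : ∀ {l l' : CFWord} {y z : ℝ}, l.length = l'.length →
    y ∈ Ioo (0 : ℝ) 1 → z ∈ Ioo (0 : ℝ) 1 → branch l y = branch l' z → l = l'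
  | [], [], _, _, _, _, _, _ => rfl
  | a :: l, b :: l', y, z, hlen, hy, hz, h => by
    have hl := branch_mem_Ioo l hy
    have hl' := branch_mem_Ioo l' hz
    have head : a = b := PNat.coe_injective <| by
      rw [← floor_one_div_branch_cons a hl, ← floor_one_div_branch_cons b hl', h]
    have tail : branch l y = branch l' z := by
      rw [← gaussMap_branch_cons a hl, ← gaussMap_branch_cons b hl', h]
    rw [head, eq_of_branch_eq_branch (by simpa using hlen) hy hz tail]

end CFWord

/-- The partial quotient `a_{i + 1}(x)` as a positive integer; only meaningful where
`pq x (i + 1)` is positive, since `Nat.toPNat'` sends `0` to `1`. -/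
noncomputable def digit (x : ℝ) (i : ℕ) : ℕ+ := (pq x (i + 1)).toPNat'

section Digits

open CFWord

variable {x : ℝ}

lemma irrational_gaussMap (hirr : Irrational x) : Irrational (gaussMap x) := by
  rw [gaussMap, one_div]
  exact hirr.inv.sub_intCast _

lemma gaussMap_mem_Ioo (hirr : Irrational x) : gaussMap x ∈ Ioo (0 : ℝ) 1 :=
  ⟨(Int.fract_nonneg (1 / x)).lt_of_ne' (irrational_gaussMap hirr).ne_zero,
    Int.fract_lt_one (1 / x)⟩

lemma irrational_gaussMap_iterate (hirr : Irrational x) : ∀ n, Irrational (gaussMap^[n] x)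
  | 0 => hirr
  | n + 1 => by
    rw [Function.iterate_succ_apply']
    exact irrational_gaussMap (irrational_gaussMap_iterate hirr n)

lemma gaussMap_iterate_mem_Ioo (hx : x ∈ Ioo (0 : ℝ) 1) (hirr : Irrational x) :
    ∀ n, gaussMap^[n] x ∈ Ioo (0 : ℝ) 1
  | 0 => hx
  | n + 1 => by
    rw [Function.iterate_succ_apply']
    exact gaussMap_mem_Ioo (irrational_gaussMap_iterate hirr n)

lemma coe_digit (hx : x ∈ Ioo (0 : ℝ) 1) (hirr : Irrational x) (n : ℕ) :
    (digit x n : ℕ) = pq x (n + 1) := by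
  obtain ⟨hpos, hlt⟩ := gaussMap_iterate_mem_Ioo hx hirr n
  have : 0 < pq x (n + 1) := Nat.floor_pos.2 (by simpa using (one_le_inv₀ hpos).2 hlt.le)
  rw [digit, Nat.toPNat'_coe, if_pos this]

lemma gaussMap_iterate_eq_inv_add (hx : x ∈ Ioo (0 : ℝ) 1) (hirr : Irrational x) (n : ℕ) :
    gaussMap^[n] x = (digit x n + gaussMap^[n + 1] x)⁻¹ := by
  have hpos := (gaussMap_iterate_mem_Ioo hx hirr n).1
  rw [coe_digit hx hirr, pq, Nat.add_sub_cancel, Function.iterate_succ_apply', gaussMap,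
    natCast_floor_eq_intCast_floor (by positivity)]
  simp

lemma gaussMap_iterate_le (hx : x ∈ Ioo (0 : ℝ) 1) (hirr : Irrational x) (n : ℕ) :
    gaussMap^[n] x ≤ 1 / digit x n := by
  rw [gaussMap_iterate_eq_inv_add hx hirr, one_div]
  gcongr
  exact le_add_of_nonneg_right (gaussMap_iterate_mem_Ioo hx hirr (n + 1)).1.le

lemma branch_digit_concat (hx : x ∈ Ioo (0 : ℝ) 1) (hirr : Irrational x) (n : ℕ) :
    branch ((List.ofFn fun i : Fin n => digit x i) ++ [digit x n]) (gaussMap^[n + 1] x) =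
      branch (List.ofFn fun i : Fin n => digit x i) (gaussMap^[n] x) := by
  rw [branch_append, branch_cons, branch_nil, ← gaussMap_iterate_eq_inv_add hx hirr]

lemma branch_digit (hx : x ∈ Ioo (0 : ℝ) 1) (hirr : Irrational x) (n : ℕ) :
    branch (List.ofFn fun i : Fin n => digit x i) (gaussMap^[n] x) = x := by
  induction n with
  | zero => simp
  | succ n ih =>
    rw [List.ofFn_succ', List.concat_eq_append]
    exact (branch_digit_concat hx hirr n).trans ih

end Digits

section HausdorffMeasure

open scoped ENNReal Topology

variable {X : Type*} [EMetricSpace X] [MeasurableSpace X] [BorelSpace X]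

theorem hausdorffMeasure_setOf_frequently_eq_zero {ι : ℕ → Type*} [∀ n, Countable (ι n)]
    (U : ∀ n, ι n → Set X) {s : ℝ} (hs : 0 < s) {c : ℕ → ℝ≥0∞} (hc : ∑' n, c n ≠ ∞)
    (hU : ∀ᶠ n in atTop, ∑' i, Metric.ediam (U n i) ^ s ≤ c n) :
    μH[s] {x | ∃ᶠ n in atTop, ∃ i, x ∈ U n i} = 0 := by
  obtain ⟨N, hN⟩ := eventually_atTop.1 hU
  have tail : Tendsto (fun M => ∑' n, c (n + M)) atTop (𝓝 0) := ENNReal.tendsto_sum_nat_add c hc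
  have diam_bound : Tendsto (fun M => (∑' n, c (n + M)) ^ s⁻¹) atTop (𝓝 0) := by
    have := (ENNReal.continuous_rpow_const (y := s⁻¹)).tendsto 0
    rw [ENNReal.zero_rpow_of_pos (inv_pos.2 hs)] at this
    exact this.comp tail
  have ediam_le (M : ℕ) (hM : N ≤ M) (p : Σ n, ι (n + M)) :
      Metric.ediam (U (p.1 + M) p.2) ≤ (∑' n, c (n + M)) ^ s⁻¹ := by
    rw [ENNReal.le_rpow_inv_iff hs]
    calc Metric.ediam (U (p.1 + M) p.2) ^ s
        ≤ ∑' i, Metric.ediam (U (p.1 + M) i) ^ s :=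
          ENNReal.le_tsum (f := fun i => Metric.ediam (U (p.1 + M) i) ^ s) p.2
      _ ≤ c (p.1 + M) := hN _ (by lia)
      _ ≤ ∑' n, c (n + M) := ENNReal.le_tsum (f := fun n => c (n + M)) p.1
  have cover (M : ℕ) : {x | ∃ᶠ n in atTop, ∃ i, x ∈ U n i} ⊆
      ⋃ p : Σ n, ι (n + M), U (p.1 + M) p.2 := by
    intro x hx
    obtain ⟨n, hn, i, hi⟩ := frequently_atTop.1 hx M
    obtain ⟨k, rfl⟩ := Nat.exists_eq_add_of_le' hn
    exact mem_iUnion.2 ⟨⟨k, i⟩, hi⟩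
  have sum_le : ∀ M, N ≤ M →
      ∑' p : Σ n, ι (n + M), Metric.ediam (U (p.1 + M) p.2) ^ s ≤ ∑' n, c (n + M) := by
    intro M hM
    rw [ENNReal.tsum_sigma fun (n : ℕ) (i : ι (n + M)) => Metric.ediam (U (n + M) i) ^ s]
    exact ENNReal.tsum_le_tsum fun n => hN _ (by lia)
  refine le_antisymm ?_ zero_le
  calc μH[s] {x | ∃ᶠ n in atTop, ∃ i, x ∈ U n i}
      ≤ liminf (fun M => ∑' p : Σ n, ι (n + M), Metric.ediam (U (p.1 + M) p.2) ^ s) atTop :=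
        Measure.hausdorffMeasure_le_liminf_tsum (ι := fun M => Σ n, ι (n + M)) s _ _ diam_bound
          (fun M p => U (p.1 + M) p.2) ((eventually_ge_atTop N).mono ediam_le) (.of_forall cover)
    _ ≤ liminf (fun M => ∑' n, c (n + M)) atTop :=
        liminf_le_liminf ((eventually_ge_atTop N).mono sum_le)
    _ = 0 := tail.liminf_eq

end HausdorffMeasure

section ExpGrowth

open ExpGrowth
open scoped ENNReal

variable {u : ℕ → ℝ≥0∞}

lemma eventually_le_ofReal_pow_of_expGrowthSup_nonpos (hu : expGrowthSup u ≤ 0) {r : ℝ}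
    (hr : 1 < r) : ∀ᶠ n in atTop, u n ≤ ENNReal.ofReal (r ^ n) := by
  have hlog : expGrowthSup u < (Real.log r : EReal) :=
    hu.trans_lt (by exact_mod_cast Real.log_pos hr)
  filter_upwards [eventually_le_exp hlog] with n hn
  rwa [← EReal.coe_natCast, ← EReal.coe_mul, EReal.exp_coe, mul_comm, Real.exp_nat_mul,
    Real.exp_log (by linarith)] at hn

lemma frequently_lt_of_expGrowthSup_pos (hu : 0 < expGrowthSup u) {T : ℝ≥0∞} (hT : T ≠ ∞) :
    ∃ᶠ n in atTop, T < u n := by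
  contrapose! hu
  have : ∀ᶠ n in atTop, u n ≤ T * (fun _ => 1) n := by simpa using hu
  exact (expGrowthSup_le_of_eventually_le hT this).trans
    (expGrowthSup_const one_ne_zero ENNReal.one_ne_top).le

end ExpGrowth

/-! ### The partition sums -/

section PartitionSum

open CFWord ExpGrowth
open scoped ENNReal

/-- The partition sum `∑ B ^ (-n f) q_n(a₁, …, aₙ) ^ (-2 s)` over all words of length `n`, whose
exponential growth rate in `n` is the pressure. The exponents `f` and `s` are independent here. -/
noncomputable def partitionSum (B f s : ℝ) (n : ℕ) : ℝ≥0∞ :=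
  ∑' a : Fin n → ℕ+,
    ENNReal.ofReal (B ^ (-(n : ℝ) * f) * (denom (List.ofFn a) : ℝ) ^ (-(2 * s)))

lemma limsup_inv_mul_log_eq_expGrowthSup_partitionSum (B f s : ℝ) :
    atTop.limsup (fun n : ℕ =>
      (((n : ℝ)⁻¹ : ℝ) : EReal) * ENNReal.log (∑' a : Fin n → ℕ+,
        ENNReal.ofReal (B ^ (-(n : ℝ) * f) *
          ((contQ n fun i => (a i : ℕ)) : ℝ) ^ (-(2 * s))))) =
      expGrowthSup (partitionSum B f s) := by
  simp only [expGrowthSup, EReal.div_eq_inv_mul, EReal.coe_inv, EReal.coe_natCast, partitionSum,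
    contQ_eq_denom_ofFn]

lemma denom_rpow_le_of_lt (l : CFWord) {s s' : ℝ} (hs : s < s') :
    (denom l : ℝ) ^ (-(2 * s')) ≤
      2 ^ (s' - s) * (2 ^ (s - s')) ^ l.length * (denom l : ℝ) ^ (-(2 * s)) := by
  have hq : (0 : ℝ) < denom l := by exact_mod_cast denom_pos l
  have growth : (2 : ℝ) ^ l.length / 2 ≤ (denom l : ℝ) ^ 2 := by
    have : (2 : ℝ) ^ l.length ≤ 2 * (denom l : ℝ) ^ 2 := by
      exact_mod_cast two_pow_length_le_denom_sq l
    linarith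
  calc (denom l : ℝ) ^ (-(2 * s'))
      = ((denom l : ℝ) ^ 2) ^ (s - s') * (denom l : ℝ) ^ (-(2 * s)) := by
        rw [← Real.rpow_natCast, ← Real.rpow_mul hq.le, ← Real.rpow_add hq]
        push_cast; ring_nf
    _ ≤ ((2 : ℝ) ^ l.length / 2) ^ (s - s') * (denom l : ℝ) ^ (-(2 * s)) := by
        refine mul_le_mul_of_nonneg_right ?_ (by positivity)
        exact Real.rpow_le_rpow_of_nonpos (by positivity) growth (by linarith)
    _ = 2 ^ (s' - s) * (2 ^ (s - s')) ^ l.length * (denom l : ℝ) ^ (-(2 * s)) := by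
        rw [Real.div_rpow (by positivity) zero_le_two, ← Real.rpow_natCast_mul zero_le_two,
          ← Real.rpow_mul_natCast zero_le_two, ← neg_sub s', Real.rpow_neg zero_le_two (s' - s),
          div_inv_eq_mul, mul_comm (l.length : ℝ)]
        ring

lemma partitionSum_le_mul {B f f' s s' : ℝ} (hB : 1 ≤ B) (hf : f ≤ f') (hs : s < s') (n : ℕ) :
    partitionSum B f' s' n ≤
      ENNReal.ofReal (2 ^ (s' - s) * (2 ^ (s - s')) ^ n) * partitionSum B f s n := by
  rw [partitionSum, partitionSum, ← ENNReal.tsum_mul_left]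
  refine ENNReal.tsum_le_tsum fun a => ?_
  rw [← ENNReal.ofReal_mul (by positivity), mul_left_comm]
  have hden := denom_rpow_le_of_lt (List.ofFn a) hs
  rw [List.length_ofFn] at hden
  have hf : -(n : ℝ) * f' ≤ -(n : ℝ) * f := by
    simpa using mul_le_mul_of_nonneg_left hf n.cast_nonneg
  gcongr

lemma exists_eventually_partitionSum_le {B f f' s s' : ℝ} (hB : 1 ≤ B) (hf : f ≤ f')
    (hs : s < s') (h : expGrowthSup (partitionSum B f s) ≤ 0) :
    ∃ C ρ : ℝ, 0 ≤ C ∧ 0 ≤ ρ ∧ ρ < 1 ∧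
      ∀ᶠ n in atTop, partitionSum B f' s' n ≤ ENNReal.ofReal (C * ρ ^ n) := by
  have hr : (1 : ℝ) < 2 ^ ((s' - s) / 2) := Real.one_lt_rpow one_lt_two (by linarith)
  refine ⟨2 ^ (s' - s), 2 ^ ((s - s') / 2), by positivity, by positivity,
    Real.rpow_lt_one_of_one_lt_of_neg one_lt_two (by linarith), ?_⟩
  filter_upwards [eventually_le_ofReal_pow_of_expGrowthSup_nonpos h hr] with n hn
  calc partitionSum B f' s' n
      ≤ ENNReal.ofReal (2 ^ (s' - s) * (2 ^ (s - s')) ^ n) * partitionSum B f s n :=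
        partitionSum_le_mul hB hf hs n
    _ ≤ ENNReal.ofReal (2 ^ (s' - s) * (2 ^ (s - s')) ^ n) *
          ENNReal.ofReal ((2 ^ ((s' - s) / 2)) ^ n) := by gcongr
    _ = ENNReal.ofReal (2 ^ (s' - s) * (2 ^ ((s - s') / 2)) ^ n) := by
        rw [← ENNReal.ofReal_mul (by positivity), mul_assoc, ← mul_pow,
          ← Real.rpow_add zero_lt_two]
        ring_nf

/-- The images of `[1/4, 3/4]` under the inverse branches of length `n` are disjoint. -/
lemma tsum_one_div_denom_sq_le (n : ℕ) :
    ∑' a : Fin n → ℕ+, ENNReal.ofReal (1 / (denom (List.ofFn a) : ℝ) ^ 2) ≤ 8 := by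
  have hquarter : uIcc (1 / 4 : ℝ) (3 / 4) ⊆ Ioo 0 1 := by
    rw [uIcc_of_le (by norm_num)]
    exact Icc_subset_Ioo (by norm_num) (by norm_num)
  let J (a : Fin n → ℕ+) : Set ℝ :=
    uIcc (branch (List.ofFn a) (1 / 4)) (branch (List.ofFn a) (3 / 4))
  have J_subset (a : Fin n → ℕ+) : J a ⊆ branch (List.ofFn a) '' Ioo 0 1 :=
    (intermediate_value_uIcc ((branch_continuousOn _).mono
      (hquarter.trans Ioo_subset_Icc_self))).trans (image_mono hquarter)
  have J_disjoint : Pairwise (Function.onFun Disjoint J) := by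
    refine fun a b hab => Set.disjoint_left.2 fun x hxa hxb => hab ?_
    obtain ⟨y, hy, rfl⟩ := J_subset a hxa
    obtain ⟨z, hz, h⟩ := J_subset b hxb
    exact List.ofFn_injective (eq_of_branch_eq_branch (by simp) hy hz h.symm)
  have volume_le : ∑' a, volume (J a) ≤ 1 := by
    rw [← measure_iUnion J_disjoint fun a => measurableSet_uIcc,
      ← (by simp : volume (Icc (0 : ℝ) 1) = 1)]
    refine measure_mono (iUnion_subset fun a => (J_subset a).trans ?_)
    rintro _ ⟨y, hy, rfl⟩
    exact Ioo_subset_Icc_self (branch_mem_Ioo _ hy)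
  have le_volume (a : Fin n → ℕ+) :
      ENNReal.ofReal (1 / (denom (List.ofFn a) : ℝ) ^ 2) ≤ 8 * volume (J a) := by
    have hq := one_le_denom (List.ofFn a)
    have := abs_sub_le_abs_branch_sub_mul (List.ofFn a) (y := 3 / 4) (z := 1 / 4)
      (by norm_num) (by norm_num)
    rw [show |(3 / 4 : ℝ) - 1 / 4| = 1 / 2 by norm_num] at this
    rw [Real.volume_interval, ← ENNReal.ofReal_ofNat, ← ENNReal.ofReal_mul (by norm_num)]
    refine ENNReal.ofReal_le_ofReal ((div_le_iff₀ (by positivity)).2 ?_)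
    linarith
  calc ∑' a : Fin n → ℕ+, ENNReal.ofReal (1 / (denom (List.ofFn a) : ℝ) ^ 2)
      ≤ ∑' a, 8 * volume (J a) := ENNReal.tsum_le_tsum le_volume
    _ = 8 * ∑' a, volume (J a) := ENNReal.tsum_mul_left
    _ ≤ 8 := mul_le_of_le_one_right' volume_le

lemma expGrowthSup_partitionSum_one_nonpos {B f : ℝ} (hB : 1 ≤ B) (hf : 0 ≤ f) :
    expGrowthSup (partitionSum B f 1) ≤ 0 := by
  have le_eight (n : ℕ) : partitionSum B f 1 n ≤ 8 * 1 := by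
    rw [mul_one]
    refine (ENNReal.tsum_le_tsum fun a => ENNReal.ofReal_le_ofReal ?_).trans
      (tsum_one_div_denom_sq_le n)
    have : B ^ (-(n : ℝ) * f) ≤ 1 :=
      Real.rpow_le_one_of_one_le_of_nonpos hB (by rw [neg_mul, neg_nonpos]; positivity)
    rw [mul_one, Real.rpow_neg (by positivity), one_div, Real.rpow_ofNat]
    exact mul_le_of_le_one_left (by positivity) this
  exact (expGrowthSup_le_of_eventually_le (by simp) (.of_forall le_eight)).trans
    (expGrowthSup_const one_ne_zero ENNReal.one_ne_top).le

end PartitionSum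

/-! ### The exponents -/

section Exponents

variable {t₀ t₁ s : ℝ}

lemma fWeighted_eq_div (ht₀ : 0 < t₀) (ht₁ : 0 < t₁) (hs : 0 < s) :
    fWeighted t₀ t₁ s = s * s / (t₁ * s + max 0 (t₁ * (1 - 2 * s) + s * t₀)) := by
  have hmax : max 0 (s / t₁ - (2 * s - 1) / t₀) =
      max 0 (t₁ * (1 - 2 * s) + s * t₀) / (t₁ * t₀) := by
    rw [← max_div_div_right (by positivity), zero_div]
    congr 1
    field_simp
    ring
  have : 0 < t₁ * s + max 0 (t₁ * (1 - 2 * s) + s * t₀) := by positivity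
  have hden : t₁ * (s / t₀ + max 0 (s / t₁ - (2 * s - 1) / t₀)) =
      (t₁ * s + max 0 (t₁ * (1 - 2 * s) + s * t₀)) / t₀ := by
    rw [hmax]
    field_simp
  rw [fWeighted, if_neg hs.ne', hden]
  field_simp

lemma fWeighted_nonneg (ht₀ : 0 < t₀) (ht₁ : 0 < t₁) (hs : 0 ≤ s) : 0 ≤ fWeighted t₀ t₁ s := by
  rcases hs.eq_or_lt with rfl | hs
  · simp [fWeighted]
  · rw [fWeighted_eq_div ht₀ ht₁ hs]
    positivity

lemma fWeighted_monotoneOn (ht₀ : 0 < t₀) (ht₁ : 0 < t₁) :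
    MonotoneOn (fWeighted t₀ t₁) (Ici 0) := by
  intro s (hs : 0 ≤ s) s' (hs' : 0 ≤ s') hle
  rcases hs.eq_or_lt with rfl | hs
  · simpa [fWeighted] using fWeighted_nonneg ht₀ ht₁ hs'
  replace hs' : 0 < s' := hs.trans_le hle
  have hmax : s * max 0 (t₁ * (1 - 2 * s') + s' * t₀) ≤
      s' * max 0 (t₁ * (1 - 2 * s) + s * t₀) := by
    rw [mul_max_of_nonneg _ _ hs.le, mul_max_of_nonneg _ _ hs'.le]
    exact max_le_max (by simp) (by nlinarith)
  rw [fWeighted_eq_div ht₀ ht₁ hs, fWeighted_eq_div ht₀ ht₁ hs',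
    div_le_div_iff₀ (by positivity) (by positivity)]
  have hmax' := mul_le_mul hle hmax (by positivity) hs'.le
  have hlin : t₁ * (s * s') * s ≤ t₁ * (s * s') * s' :=
    mul_le_mul_of_nonneg_left hle (by positivity)
  nlinarith

/-- The threshold exponent `κ = s / (t₁ (1 - s) + s t₀)` balances the two families of cylinders
covering the set: those with `aₙ > B ^ (κ n)`, and those with `aₙ ≤ B ^ (κ n)` and `aₙ₊₁` large. -/
lemma exists_threshold_exponent (ht₀ : 0 < t₀) (ht₁ : 0 < t₁) (hs : 0 < s) (hs1 : s < 1) :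
    ∃ κ : ℝ, 0 ≤ κ ∧ fWeighted t₀ t₁ s ≤ κ * s ∧
      fWeighted t₀ t₁ s + max 0 (1 - 2 * s + s * t₀ / t₁) * κ ≤ s / t₁ := by
  have h1s : 0 < 1 - s := by linarith
  have hden : 0 < t₁ * (1 - s) + s * t₀ := by positivity
  have hexp : 1 - 2 * s + s * t₀ / t₁ = (t₁ * (1 - 2 * s) + s * t₀) / t₁ := by field_simp
  refine ⟨s / (t₁ * (1 - s) + s * t₀), by positivity, ?_, ?_⟩
  · rw [fWeighted_eq_div ht₀ ht₁ hs, div_mul_eq_mul_div]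
    refine div_le_div_of_nonneg_left (by positivity) hden ?_
    linarith [le_max_right 0 (t₁ * (1 - 2 * s) + s * t₀)]
  · rw [fWeighted_eq_div ht₀ ht₁ hs, hexp]
    rcases le_total 0 (t₁ * (1 - 2 * s) + s * t₀) with h | h
    · rw [max_eq_right h, max_eq_right (by positivity),
        show t₁ * s + (t₁ * (1 - 2 * s) + s * t₀) = t₁ * (1 - s) + s * t₀ by ring]
      apply le_of_eq
      field_simp
      ring
    · rw [max_eq_left h, max_eq_left (div_nonpos_of_nonpos_of_nonneg h ht₁.le)]
      apply le_of_eq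
      field_simp
      ring

/-- The exponents of the pair of large partial quotients `aₙ ≈ B ^ (κ n)`, `aₙ₊₁ ≈ B ^ (δ n)` which
carries the lower bound. -/
lemma exists_marker_exponents (ht₀ : 0 < t₀) (ht₁ : 0 < t₁) (hs : 0 < s) (hs1 : s < 1) :
    ∃ κ δ : ℝ, 0 ≤ κ ∧ 0 < δ ∧ κ * t₀ + δ * t₁ = 1 ∧ κ * s ≤ fWeighted t₀ t₁ s ∧
      (2 * s - 1) * κ + s * δ ≤ fWeighted t₀ t₁ s := by
  have h1s : 0 < 1 - s := by linarith
  have : 0 < t₁ * (1 - s) + s * t₀ := by positivity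
  rw [fWeighted_eq_div ht₀ ht₁ hs]
  rcases le_total 0 (t₁ * (1 - 2 * s) + s * t₀) with h | h
  · rw [max_eq_right h,
      show t₁ * s + (t₁ * (1 - 2 * s) + s * t₀) = t₁ * (1 - s) + s * t₀ by ring]
    refine ⟨s / (t₁ * (1 - s) + s * t₀), (1 - s) / (t₁ * (1 - s) + s * t₀), by positivity,
      by positivity, ?_, ?_, ?_⟩
    · field_simp
      ring
    · apply le_of_eq
      field_simp
    · apply le_of_eq
      field_simp
      ring
  · rw [max_eq_left h, add_zero]
    exact ⟨0, 1 / t₁, le_rfl, by positivity, by field_simp; ring, by rw [zero_mul]; positivity,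
      by apply le_of_eq; field_simp; ring⟩

end Exponents

/-- The set `𝒟₂ᵗ(B)` of those irrational `x` in `(0, 1)` for which the weighted product of two
consecutive partial quotients satisfies `aₙ ^ t₀ * aₙ₊₁ ^ t₁ ≥ B ^ n` infinitely often. -/
def weightedProductSet (t₀ t₁ B : ℝ) : Set ℝ :=
  {x : ℝ | x ∈ Ioo (0 : ℝ) 1 ∧ Irrational x ∧
    {n : ℕ | B ^ n ≤ (pq x n : ℝ) ^ t₀ * (pq x (n + 1) : ℝ) ^ t₁}.Infinite}

/-! ### The upper bound -/

section UpperBound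

open CFWord
open scoped ENNReal

/-- The points whose continued fraction expansion starts with `l` and whose remaining tail, as a
number in `[0, 1]`, is at most `r`. -/
def cylinder (l : CFWord) (r : ℝ) : Set ℝ := branch l '' (Icc 0 1 ∩ Iic r)

lemma ediam_cylinder_rpow_le (l : CFWord) {q r s : ℝ} (hq : 0 < q) (hql : q ≤ denom l)
    (hr : 0 ≤ r) (hs : 0 ≤ s) :
    Metric.ediam (cylinder l r) ^ s ≤ ENNReal.ofReal (r ^ s * q ^ (-(2 * s))) := by
  have ediam_le : Metric.ediam (cylinder l r) ≤ ENNReal.ofReal (r / q ^ 2) := by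
    refine Metric.ediam_le ?_
    rintro _ ⟨y, ⟨hy, hyr : y ≤ r⟩, rfl⟩ _ ⟨z, ⟨hz, hzr : z ≤ r⟩, rfl⟩
    rw [edist_dist, Real.dist_eq]
    refine ENNReal.ofReal_le_ofReal ((abs_branch_sub_le l hy hz).trans ?_)
    gcongr
    exact abs_sub_le_iff.2 ⟨by linarith [hz.1], by linarith [hy.1]⟩
  calc Metric.ediam (cylinder l r) ^ s
      ≤ ENNReal.ofReal (r / q ^ 2) ^ s := by gcongr
    _ = ENNReal.ofReal (r ^ s * q ^ (-(2 * s))) := by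
        rw [ENNReal.ofReal_rpow_of_nonneg (by positivity) hs, Real.div_rpow hr (by positivity),
          ← Real.rpow_natCast_mul hq.le, div_eq_mul_inv, ← Real.rpow_neg hq.le]
        norm_cast

lemma tsum_one_div_le_one_add_log {x : ℝ} (hx : 1 ≤ x) :
    ∑' k : {k : ℕ+ // (k : ℝ) ≤ x}, ENNReal.ofReal (1 / (k : ℝ)) ≤
      ENNReal.ofReal (1 + Real.log x) := by
  let toIcc (k : {k : ℕ+ // (k : ℝ) ≤ x}) : Finset.Icc 1 ⌊x⌋₊ :=
    ⟨k, Finset.mem_Icc.2 ⟨k.1.pos, Nat.le_floor k.2⟩⟩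
  have toIcc_injective : Function.Injective toIcc := fun k k' h =>
    Subtype.ext (PNat.coe_injective (congrArg (fun n : Finset.Icc 1 ⌊x⌋₊ => (n : ℕ)) h))
  calc ∑' k : {k : ℕ+ // (k : ℝ) ≤ x}, ENNReal.ofReal (1 / (k : ℝ))
      ≤ ∑' n : Finset.Icc 1 ⌊x⌋₊, ENNReal.ofReal (1 / (n : ℝ)) :=
        ENNReal.tsum_comp_le_tsum_of_injective toIcc_injective
          fun n : Finset.Icc 1 ⌊x⌋₊ => ENNReal.ofReal (1 / (n : ℝ))
    _ = ENNReal.ofReal (∑ n ∈ Finset.Icc 1 ⌊x⌋₊, 1 / (n : ℝ)) := by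
        rw [ENNReal.ofReal_sum_of_nonneg fun i _ => by positivity]
        exact Finset.tsum_subtype (Finset.Icc 1 ⌊x⌋₊) fun n => ENNReal.ofReal (1 / (n : ℝ))
    _ ≤ ENNReal.ofReal (1 + Real.log x) := by
        have := harmonic_floor_le_one_add_log x hx
        rw [harmonic_eq_sum_Icc] at this
        gcongr
        simpa using this

variable {t₀ t₁ B κ f s C ρ : ℝ}

lemma tsum_large_digit_le (hB : 1 < B) (hs : 0 < s) (hf : 0 ≤ f) (hκ : f ≤ κ * s) (m : ℕ) :
    ∑' a : Fin m → ℕ+, Metric.ediam (cylinder (List.ofFn a) (B ^ (-(κ * (m + 1))))) ^ s ≤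
      partitionSum B f s m := by
  refine ENNReal.tsum_le_tsum fun a => ?_
  refine (ediam_cylinder_rpow_le _ (by exact_mod_cast denom_pos _) le_rfl (by positivity)
    hs.le).trans (ENNReal.ofReal_le_ofReal ?_)
  rw [← Real.rpow_mul (by positivity)]
  refine mul_le_mul_of_nonneg_right (Real.rpow_le_rpow_of_exponent_le hB.le ?_) (by positivity)
  nlinarith [m.cast_nonneg (α := ℝ)]

/-- For `aₘ₊₁ = k`, the inequality `aₘ₊₁ ^ t₀ * aₘ₊₂ ^ t₁ ≥ B ^ (m + 1)` bounds the tail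
`[aₘ₊₂, …]` by this quantity. -/
noncomputable def tailBound (t₀ t₁ B : ℝ) (m : ℕ) (k : ℝ) : ℝ :=
  (k ^ t₀ * B ^ (-(m + 1 : ℝ))) ^ t₁⁻¹

lemma tailBound_rpow_mul_le (hB : 1 < B) (hf : 0 ≤ f)
    (hκ : f + max 0 (1 - 2 * s + s * t₀ / t₁) * κ ≤ s / t₁) {m : ℕ} {q k : ℝ} (hq : 0 < q)
    (hk : 1 ≤ k) (hkB : k ≤ B ^ (κ * (m + 1))) :
    tailBound t₀ t₁ B m k ^ s * (q * k) ^ (-(2 * s)) ≤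
      B ^ (-(m : ℝ) * f) * q ^ (-(2 * s)) * (1 / k) := by
  have hB₀ : 0 < B := by linarith
  have hk₀ : 0 < k := by linarith
  set e := 1 - 2 * s + s * t₀ / t₁ with he
  have split : tailBound t₀ t₁ B m k ^ s * (q * k) ^ (-(2 * s)) =
      B ^ (-(m + 1 : ℝ) * (s / t₁)) * k ^ e * q ^ (-(2 * s)) * (1 / k) := by
    have hke : k ^ e * (1 / k) = k ^ (t₀ * (t₁⁻¹ * s)) * k ^ (-(2 * s)) := by
      rw [one_div, ← Real.rpow_neg_one k, ← Real.rpow_add hk₀, ← Real.rpow_add hk₀, he]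
      congr 1
      ring
    rw [tailBound, ← Real.rpow_mul (by positivity), Real.mul_rpow (by positivity) (by positivity),
      ← Real.rpow_mul hk₀.le, ← Real.rpow_mul hB₀.le, Real.mul_rpow hq.le hk₀.le,
      show t₁⁻¹ * s = s / t₁ by ring] at *
    linear_combination -(B ^ (-(m + 1 : ℝ) * (s / t₁)) * q ^ (-(2 * s))) * hke
  have digit_le : k ^ e ≤ B ^ (κ * (m + 1) * max 0 e) :=
    calc k ^ e ≤ k ^ max 0 e := Real.rpow_le_rpow_of_exponent_le hk (le_max_right _ _)
      _ ≤ (B ^ (κ * (m + 1))) ^ max 0 e := Real.rpow_le_rpow hk₀.le hkB (le_max_left _ _)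
      _ = B ^ (κ * (m + 1) * max 0 e) := (Real.rpow_mul hB₀.le _ _).symm
  have base_le : B ^ (-(m + 1 : ℝ) * (s / t₁)) * k ^ e ≤ B ^ (-(m : ℝ) * f) :=
    calc B ^ (-(m + 1 : ℝ) * (s / t₁)) * k ^ e
        ≤ B ^ (-(m + 1 : ℝ) * (s / t₁)) * B ^ (κ * (m + 1) * max 0 e) := by gcongr
      _ = B ^ (-(m + 1 : ℝ) * (s / t₁) + κ * (m + 1) * max 0 e) := (Real.rpow_add hB₀ _ _).symm
      _ ≤ B ^ (-(m : ℝ) * f) := by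
          refine Real.rpow_le_rpow_of_exponent_le hB.le ?_
          nlinarith [m.cast_nonneg (α := ℝ)]
  rw [split]
  gcongr

lemma tsum_small_digit_le (hB : 1 < B) (hs : 0 < s) (hf : 0 ≤ f) (hκ₀ : 0 ≤ κ)
    (hκ : f + max 0 (1 - 2 * s + s * t₀ / t₁) * κ ≤ s / t₁) (m : ℕ) :
    ∑' p : (Fin m → ℕ+) × {k : ℕ+ // (k : ℝ) ≤ B ^ (κ * (m + 1))},
      Metric.ediam (cylinder (List.ofFn p.1 ++ [p.2.1]) (tailBound t₀ t₁ B m p.2.1)) ^ s ≤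
      partitionSum B f s m * ENNReal.ofReal (1 + κ * (m + 1) * Real.log B) := by
  have hB₀ : 0 < B := by linarith
  have hlog := tsum_one_div_le_one_add_log
    (Real.one_le_rpow hB.le (by positivity : 0 ≤ κ * (m + 1)))
  rw [Real.log_rpow hB₀] at hlog
  refine le_trans ?_ (mul_le_mul_right hlog _)
  rw [partitionSum, ← ENNReal.tsum_mul_right, ENNReal.tsum_prod']
  refine ENNReal.tsum_le_tsum fun a => ?_
  rw [← ENNReal.tsum_mul_left]
  refine ENNReal.tsum_le_tsum fun k => ?_
  have hq : (0 : ℝ) < denom (List.ofFn a) := by exact_mod_cast denom_pos _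
  have hk : (1 : ℝ) ≤ (k : ℕ+) := one_le_coe k
  have hqk : (denom (List.ofFn a) : ℝ) * (k : ℕ+) ≤ denom (List.ofFn a ++ [k.1]) := by
    exact_mod_cast denom_concat (List.ofFn a) k.1 ▸ Nat.le_add_right _ _
  rw [← ENNReal.ofReal_mul (by positivity)]
  exact (ediam_cylinder_rpow_le _ (by positivity) hqk
    (by unfold tailBound; positivity) hs.le).trans
    (ENNReal.ofReal_le_ofReal (tailBound_rpow_mul_le hB hf hκ hq hk k.2))

lemma frequently_mem_cylinder (ht₁ : 0 < t₁) (hB : 0 < B) {x : ℝ}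
    (hx : x ∈ weightedProductSet t₀ t₁ B) (κ : ℝ) :
    ∃ᶠ m : ℕ in atTop,
      (∃ a : Fin m → ℕ+, x ∈ cylinder (List.ofFn a) (B ^ (-(κ * (m + 1))))) ∨
      ∃ p : (Fin m → ℕ+) × {k : ℕ+ // (k : ℝ) ≤ B ^ (κ * (m + 1))},
        x ∈ cylinder (List.ofFn p.1 ++ [p.2.1]) (tailBound t₀ t₁ B m p.2.1) := by
  obtain ⟨hx01, hirr, hinf⟩ := hx
  have tail_mem (n : ℕ) := Ioo_subset_Icc_self (gaussMap_iterate_mem_Ioo hx01 hirr n)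
  refine frequently_atTop.2 fun N => ?_
  obtain ⟨n, hn, hNn⟩ := hinf.exists_gt N
  obtain ⟨m, rfl⟩ : ∃ m, n = m + 1 := ⟨n - 1, by lia⟩
  refine ⟨m, by lia, ?_⟩
  rcases le_or_gt (digit x m : ℝ) (B ^ (κ * (m + 1))) with hle | hgt
  · refine .inr ⟨(fun i => digit x i, ⟨digit x m, hle⟩), gaussMap^[m + 1] x,
      ⟨tail_mem _, (gaussMap_iterate_le hx01 hirr _).trans ?_⟩, ?_⟩
    · have hn : B ^ (m + 1 : ℝ) ≤ (digit x m : ℝ) ^ t₀ * (digit x (m + 1) : ℝ) ^ t₁ := by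
        rw [coe_digit hx01 hirr, coe_digit hx01 hirr]
        exact_mod_cast hn
      rw [tailBound, Real.le_rpow_inv_iff_of_pos (by positivity) (by positivity) ht₁,
        Real.div_rpow zero_le_one (by positivity), Real.one_rpow, Real.rpow_neg hB.le,
        ← div_eq_mul_inv, div_le_div_iff₀ (by positivity) (by positivity), one_mul]
      exact hn
    · exact (branch_digit_concat hx01 hirr m).trans (branch_digit hx01 hirr m)
  · refine .inl ⟨fun i => digit x i, gaussMap^[m] x,
      ⟨tail_mem _, (gaussMap_iterate_le hx01 hirr _).trans ?_⟩, branch_digit hx01 hirr m⟩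
    rw [Real.rpow_neg hB.le, ← one_div]
    exact one_div_le_one_div_of_le (by positivity) hgt.le

lemma hausdorffMeasure_weightedProductSet_eq_zero (ht₁ : 0 < t₁) (hB : 1 < B) (hs : 0 < s)
    (hf : 0 ≤ f) (hκ₀ : 0 ≤ κ) (hκ₁ : f ≤ κ * s)
    (hκ₂ : f + max 0 (1 - 2 * s + s * t₀ / t₁) * κ ≤ s / t₁) (hC : 0 ≤ C) (hρ₀ : 0 ≤ ρ)
    (hρ₁ : ρ < 1) (hdecay : ∀ᶠ n in atTop, partitionSum B f s n ≤ ENNReal.ofReal (C * ρ ^ n)) :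
    μH[s] (weightedProductSet t₀ t₁ B) = 0 := by
  have norm_lt : ‖ρ‖ < 1 := by rwa [Real.norm_of_nonneg hρ₀]
  have geometric : Summable fun n : ℕ => ρ ^ n := summable_geometric_of_lt_one hρ₀ hρ₁
  have weighted_geometric :
      Summable fun m : ℕ => C * ρ ^ m * (1 + κ * (m + 1) * Real.log B) := by
    refine ((geometric.mul_left (C * (1 + κ * Real.log B))).add
      ((summable_pow_mul_geometric_of_norm_lt_one 1 norm_lt).mul_left
        (C * κ * Real.log B))).congr fun m => ?_
    ring
  have large : μH[s] {x | ∃ᶠ m : ℕ in atTop, ∃ a : Fin m → ℕ+,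
      x ∈ cylinder (List.ofFn a) (B ^ (-(κ * (m + 1))))} = 0 :=
    hausdorffMeasure_setOf_frequently_eq_zero _ hs (geometric.mul_left C).tsum_ofReal_ne_top <|
      hdecay.mono fun m hm => (tsum_large_digit_le hB hs hf hκ₁ m).trans hm
  have small : μH[s] {x | ∃ᶠ m : ℕ in atTop,
      ∃ p : (Fin m → ℕ+) × {k : ℕ+ // (k : ℝ) ≤ B ^ (κ * (m + 1))},
        x ∈ cylinder (List.ofFn p.1 ++ [p.2.1]) (tailBound t₀ t₁ B m p.2.1)} = 0 := by
    refine hausdorffMeasure_setOf_frequently_eq_zero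
      (ι := fun m => (Fin m → ℕ+) × {k : ℕ+ // (k : ℝ) ≤ B ^ (κ * (m + 1))})
      _ hs weighted_geometric.tsum_ofReal_ne_top <|
      hdecay.mono fun m hm => (tsum_small_digit_le hB hs hf hκ₀ hκ₂ m).trans ?_
    rw [ENNReal.ofReal_mul (by positivity)]
    gcongr
  exact measure_mono_null
    (fun x hx => frequently_or_distrib.1 (frequently_mem_cylinder ht₁ (by linarith) hx κ))
    (measure_union_null large small)

open ExpGrowth in
theorem dimH_weightedProductSet_le (ht₀ : 0 < t₀) (ht₁ : 0 < t₁) (hB : 1 < B) {s' : ℝ}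
    (hs : 0 ≤ s) (hss' : s < s') (hs' : s' < 1)
    (h : expGrowthSup (partitionSum B (fWeighted t₀ t₁ s) s) ≤ 0) :
    dimH (weightedProductSet t₀ t₁ B) ≤ ENNReal.ofReal s' := by
  have hs'₀ : 0 < s' := hs.trans_lt hss'
  obtain ⟨κ, hκ₀, hκ₁, hκ₂⟩ := exists_threshold_exponent ht₀ ht₁ hs'₀ hs'
  obtain ⟨C, ρ, hC, hρ₀, hρ₁, hdecay⟩ := exists_eventually_partitionSum_le hB.le
    (fWeighted_monotoneOn ht₀ ht₁ hs hs'₀.le hss'.le) hss' h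
  refine dimH_le_of_hausdorffMeasure_ne_top (d := s'.toNNReal) ?_
  rw [Real.coe_toNNReal _ hs'₀.le, hausdorffMeasure_weightedProductSet_eq_zero ht₁ hB hs'₀
    (fWeighted_nonneg ht₀ ht₁ hs'₀.le) hκ₀ hκ₁ hκ₂ hC hρ₀ hρ₁ hdecay]
  exact ENNReal.zero_ne_top

end UpperBound

/-! ### Mass distribution on sequence spaces -/

section MassDistribution

open scoped ENNReal Topology

lemma ofReal_le_dimH_of_measure_le {X : Type*} [EMetricSpace X] [MeasurableSpace X] [BorelSpace X]
    {μ : Measure X} {D : Set X} {s : ℝ} {C : ℝ≥0∞} (hs : 0 ≤ s) (hC : C ≠ ∞)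
    (hμ : ∀ U, IsClosed U → Metric.ediam U ≤ 1 → μ U ≤ C * Metric.ediam U ^ s) (hD : μ D ≠ 0) :
    ENNReal.ofReal s ≤ dimH D := by
  have : C + 1 ≠ ∞ := by finiteness
  have hle : (C + 1)⁻¹ • μ ≤ μH[s] := by
    refine Measure.le_hausdorffMeasure s _ 1 one_pos fun U hU => ?_
    rw [Measure.smul_apply, smul_eq_mul, mul_comm, ← div_eq_mul_inv]
    refine ENNReal.div_le_of_le_mul ?_
    calc μ U ≤ μ (closure U) := measure_mono subset_closure
      _ ≤ C * Metric.ediam U ^ s := by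
          simpa only [Metric.ediam_closure] using
            hμ _ isClosed_closure (by rwa [Metric.ediam_closure])
      _ ≤ Metric.ediam U ^ s * (C + 1) := by rw [mul_comm]; gcongr; exact le_self_add
  have hne : μH[s] D ≠ 0 := fun h0 => by
    have := (hle D).trans_eq h0
    simp [hD, hC] at this
  exact le_dimH_of_hausdorffMeasure_ne_zero (d := s.toNNReal) (by rwa [Real.coe_toNNReal _ hs])

variable {β : Type*}

lemma exists_branching_of_nontrivial {E : Set (ℕ → β)} (hE : E.Nontrivial) :
    ∃ w ∈ E, ∃ k, E ⊆ PiNat.cylinder w k ∧ ((fun v => v k) '' E).Nontrivial := by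
  classical
  obtain ⟨w, hw, w', hw', hne⟩ := hE
  have hex : ∃ k, ∃ v ∈ E, v k ≠ w k :=
    (Function.ne_iff.1 hne).imp fun k hk => ⟨w', hw', hk.symm⟩
  obtain ⟨v, hv, hvk⟩ := Nat.find_spec hex
  refine ⟨w, hw, Nat.find hex, fun u hu i hi => ?_, ⟨_, ⟨v, hv, rfl⟩, _, ⟨w, hw, rfl⟩, hvk⟩⟩
  by_contra hui
  exact Nat.find_min hex hi ⟨u, hu, hui⟩

variable [MeasurableSpace β] [DiscreteMeasurableSpace β] (P : ℕ → PMF β)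

lemma ae_infinitePi_forall_mem_support :
    ∀ᵐ w ∂Measure.infinitePi fun k => (P k).toMeasure, ∀ k, w k ∈ (P k).support := by
  refine ae_all_iff.2 fun k => ?_
  have hk : ∀ᵐ b ∂(P k).toMeasure, b ∈ (P k).support := by
    rw [Filter.Eventually, ofPred_mem_eq, mem_ae_iff_prob_eq_one .of_discrete,
      PMF.toMeasure_apply_eq_one_iff _ .of_discrete]
  exact (measurePreserving_eval_infinitePi
    (fun k => (P k).toMeasure) k).quasiMeasurePreserving.ae hk

lemma infinitePi_cylinder_inter_eval_preimage (w : ℕ → β) (k : ℕ) (A : Set β) :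
    Measure.infinitePi (fun k => (P k).toMeasure) (PiNat.cylinder w k ∩ {v | v k ∈ A}) =
      (∏ i ∈ Finset.range k, P i (w i)) * (P k).toMeasure A := by
  classical
  have hpi : PiNat.cylinder w k ∩ {v | v k ∈ A} = Set.pi (Finset.range (k + 1))
      fun i => if i = k then A else {w i} := by
    ext v
    simp only [mem_inter_iff, PiNat.mem_cylinder_iff, mem_ofPred_eq, Set.mem_pi, Finset.coe_range,
      mem_Iio, Nat.lt_succ_iff_lt_or_eq]
    constructor
    · rintro ⟨hv, hk⟩ i (hi | rfl)
      · simp [hi.ne, hv i hi]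
      · simpa using hk
    · refine fun h => ⟨fun i hi => ?_, ?_⟩
      · simpa [hi.ne] using h i (.inl hi)
      · simpa using h k (.inr rfl)
  rw [hpi, Measure.infinitePi_pi _ fun _ _ => .of_discrete, Finset.prod_range_succ, if_pos rfl]
  congr 1
  refine Finset.prod_congr rfl fun i hi => ?_
  rw [if_neg (Finset.mem_range.1 hi).ne, PMF.toMeasure_apply_singleton _ _ .of_discrete]

variable {P}

lemma infinitePi_le_of_branching {E : Set (ℕ → β)} {M : ℝ≥0∞}
    (hprod : ∀ w ∈ E, Tendsto (fun k => ∏ i ∈ Finset.range k, P i (w i)) atTop (𝓝 0))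
    (hbranch : ∀ w ∈ E, ∀ k, E ⊆ PiNat.cylinder w k → ((fun v => v k) '' E).Nontrivial →
      (∏ i ∈ Finset.range k, P i (w i)) * (P k).toMeasure ((fun v => v k) '' E) ≤ M) :
    Measure.infinitePi (fun k => (P k).toMeasure) E ≤ M := by
  rcases E.subsingleton_or_nontrivial with hE | hE
  · rcases hE.eq_empty_or_singleton with rfl | ⟨w, rfl⟩
    · simp
    · refine (ge_of_tendsto' (hprod w rfl) fun k => ?_).trans zero_le
      have := infinitePi_cylinder_inter_eval_preimage P w k univ
      simp only [measure_univ, mul_one, mem_univ, ofPred_true, inter_univ] at this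
      exact this ▸ measure_mono (singleton_subset_iff.2 (PiNat.self_mem_cylinder w k))
  · obtain ⟨w, hw, k, hwk, hk⟩ := exists_branching_of_nontrivial hE
    have hsub : E ⊆ PiNat.cylinder w k ∩ {v | v k ∈ (fun v => v k) '' E} :=
      fun v hv => ⟨hwk hv, v, hv, rfl⟩
    exact (measure_mono hsub).trans
      ((infinitePi_cylinder_inter_eval_preimage P w k _).trans_le (hbranch w hw k hwk hk))

theorem ofReal_le_dimH_of_coding {X : Type*} [MetricSpace X] [MeasurableSpace X] [BorelSpace X]
    {code : (ℕ → β) → X} {approx : ℕ → (ℕ → β) → X} {D : Set X} {s : ℝ} {C : ℝ≥0∞}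
    (hs : 0 ≤ s) (hC : C ≠ ∞) (happrox : ∀ k, Measurable (approx k))
    (hcode : ∀ w : ℕ → β, (∀ k, w k ∈ (P k).support) →
      code w ∈ D ∧ Tendsto (fun k => approx k w) atTop (𝓝 (code w)))
    (hprod : ∀ w : ℕ → β, (∀ k, w k ∈ (P k).support) →
      Tendsto (fun k => ∏ i ∈ Finset.range k, P i (w i)) atTop (𝓝 0))
    (hbranch : ∀ E : Set (ℕ → β), (∀ w ∈ E, ∀ k, w k ∈ (P k).support) →
      Bornology.IsBounded (code '' E) → ∀ w ∈ E, ∀ k, E ⊆ PiNat.cylinder w k →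
      ((fun v => v k) '' E).Nontrivial →
      (∏ i ∈ Finset.range k, P i (w i)) * (P k).toMeasure ((fun v => v k) '' E) ≤
        C * Metric.ediam (code '' E) ^ s) :
    ENNReal.ofReal s ≤ dimH D := by
  set μ := Measure.infinitePi fun k => (P k).toMeasure
  have hsupp := ae_infinitePi_forall_mem_support P
  have hmeas : AEMeasurable code μ :=
    aemeasurable_of_tendsto_metrizable_ae' (fun k => (happrox k).aemeasurable)
      (hsupp.mono fun w hw => (hcode w hw).2)
  refine ofReal_le_dimH_of_measure_le (μ := μ.map code) hs hC (fun U hU hU₁ => ?_) ?_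
  · rw [Measure.map_apply_of_aemeasurable hmeas hU.measurableSet]
    set E := {w | (∀ k, w k ∈ (P k).support) ∧ code w ∈ U}
    have himage : code '' E ⊆ U := image_subset_iff.2 fun w hw => hw.2
    have hbounded : Bornology.IsBounded (code '' E) :=
      (Metric.isBounded_iff_ediam_ne_top.2 (hU₁.trans_lt ENNReal.one_lt_top).ne).subset himage
    calc μ (code ⁻¹' U) ≤ μ E := measure_mono_ae (hsupp.mono fun w hw hwU => ⟨hw, hwU⟩)
      _ ≤ C * Metric.ediam (code '' E) ^ s :=
          infinitePi_le_of_branching (fun w hw => hprod w hw.1) fun w hw k =>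
            hbranch E (fun w hw => hw.1) hbounded w hw k
      _ ≤ C * Metric.ediam U ^ s := by gcongr
  · have hD : ∀ᵐ w ∂μ, code w ∈ D := hsupp.mono fun w hw => (hcode w hw).1
    have : μ univ ≤ μ (code ⁻¹' D) := measure_mono_ae (hD.mono fun w hw _ => hw)
    refine fun h0 => (zero_lt_one' ℝ≥0∞).not_ge ?_
    calc 1 = μ univ := measure_univ.symm
      _ ≤ μ.map code D := this.trans (Measure.le_map_apply hmeas D)
      _ = 0 := h0

end MassDistribution

/-! ### Points coded by sequences of blocks -/

section Blocks

open CFWord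
open scoped Topology

/-- A block is a word starting with `1, 1`. This normalization keeps every branch along a block
inside `[1/2, 2/3]`, away from the end points of `[0, 1]`. -/
def IsBlock (l : CFWord) : Prop := [1, 1] <+: l

lemma IsBlock.two_le_denom {l : CFWord} (hl : IsBlock l) : 2 ≤ denom l := by
  obtain ⟨u, rfl⟩ := hl
  calc 2 = denom [1, 1] * 1 := by simp
    _ ≤ denom [1, 1] * denom u := Nat.mul_le_mul_left _ (denom_pos u)
    _ ≤ denom ([1, 1] ++ u) := denom_mul_denom_le _ _

lemma IsBlock.branch_mem {l : CFWord} (hl : IsBlock l) {y : ℝ} (hy : y ∈ Icc (0 : ℝ) 1) :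
    branch l y ∈ Icc (1 / 2 : ℝ) (2 / 3) := by
  obtain ⟨u, rfl⟩ := hl
  obtain ⟨h0, h1⟩ := branch_mem_Icc u hy
  rw [branch_append]
  simp only [branch_cons, branch_nil, PNat.one_coe, Nat.cast_one]
  have : (1 + (1 + branch u y)⁻¹)⁻¹ = (1 + branch u y) / (2 + branch u y) := by
    field_simp
    ring
  rw [this]
  constructor
  · rw [div_le_div_iff₀ (by norm_num) (by linarith)]
    linarith
  · rw [div_le_div_iff₀ (by linarith) (by norm_num)]
    linarith

/-- The concatenation of the first `k` blocks. -/
def prefixWord (w : ℕ → CFWord) (k : ℕ) : CFWord := (List.range k).flatMap w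

variable {w v : ℕ → CFWord}

@[simp] lemma prefixWord_zero (w : ℕ → CFWord) : prefixWord w 0 = [] := rfl

lemma prefixWord_succ (w : ℕ → CFWord) (k : ℕ) : prefixWord w (k + 1) = prefixWord w k ++ w k := by
  simp [prefixWord, List.range_succ]

lemma prefixWord_add (w : ℕ → CFWord) (k j : ℕ) :
    prefixWord w (k + j) = prefixWord w k ++ prefixWord (fun i => w (k + i)) j := by
  simp [prefixWord, List.range_add, List.flatMap_map]

lemma prefixWord_congr {k : ℕ} (h : ∀ i < k, v i = w i) : prefixWord v k = prefixWord w k :=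
  List.flatMap_congr fun i hi => h i (List.mem_range.1 hi)

lemma two_pow_le_denom_prefixWord (hw : ∀ k, IsBlock (w k)) (k : ℕ) :
    2 ^ k ≤ denom (prefixWord w k) := by
  induction k with
  | zero => simp
  | succ k ih =>
    calc 2 ^ (k + 1) ≤ denom (prefixWord w k) * denom (w k) :=
          Nat.mul_le_mul ih (hw k).two_le_denom
      _ ≤ denom (prefixWord w (k + 1)) := prefixWord_succ w k ▸ denom_mul_denom_le _ _

/-- The number whose continued fraction expansion is the concatenation of all the blocks. -/
noncomputable def codedPoint (w : ℕ → CFWord) : ℝ :=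
  limUnder atTop fun k => branch (prefixWord w k) 0

lemma tendsto_codedPoint (hw : ∀ k, IsBlock (w k)) :
    Tendsto (fun k => branch (prefixWord w k) 0) atTop (𝓝 (codedPoint w)) := by
  refine (cauchySeq_of_le_geometric (1 / 2) 1 (by norm_num) fun k => ?_).tendsto_limUnder
  have hmem := branch_mem_Icc (w k) (left_mem_Icc.2 zero_le_one)
  have hpow : (2 : ℝ) ^ k ≤ denom (prefixWord w k) := by
    exact_mod_cast two_pow_le_denom_prefixWord hw k
  have hone := one_le_denom (prefixWord w k)
  rw [prefixWord_succ, branch_append, Real.dist_eq, one_mul, one_div_pow]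
  refine (abs_branch_sub_le _ (left_mem_Icc.2 zero_le_one) hmem).trans ?_
  rw [zero_sub, abs_neg, abs_of_nonneg hmem.1]
  exact div_le_div₀ zero_le_one hmem.2 (by positivity) (by nlinarith)

lemma codedPoint_mem_Icc (hw : ∀ k, IsBlock (w k)) : codedPoint w ∈ Icc (0 : ℝ) 1 :=
  isClosed_Icc.mem_of_tendsto (tendsto_codedPoint hw)
    (.of_forall fun _ => branch_mem_Icc _ (left_mem_Icc.2 zero_le_one))

lemma codedPoint_eq_branch (hw : ∀ k, IsBlock (w k)) (k : ℕ) :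
    codedPoint w = branch (prefixWord w k) (codedPoint fun i => w (k + i)) := by
  have hw' : ∀ i, IsBlock (w (k + i)) := fun i => hw _
  have hlim := (tendsto_add_atTop_iff_nat (f := fun j => branch (prefixWord w j) 0) k).2
    (tendsto_codedPoint hw)
  have hcont := branch_continuousOn (prefixWord w k) _ (codedPoint_mem_Icc hw')
  refine tendsto_nhds_unique hlim <| (hcont.tendsto.comp <| tendsto_nhdsWithin_iff.2
    ⟨tendsto_codedPoint hw', .of_forall fun _ =>
      branch_mem_Icc _ (left_mem_Icc.2 zero_le_one)⟩).congr fun j => ?_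
  rw [Function.comp_apply, ← branch_append, ← prefixWord_add, add_comm]

lemma codedPoint_mem (hw : ∀ k, IsBlock (w k)) : codedPoint w ∈ Icc (1 / 2 : ℝ) (2 / 3) := by
  rw [codedPoint_eq_branch hw 1]
  simpa [prefixWord_succ] using (hw 0).branch_mem (codedPoint_mem_Icc fun i => hw (1 + i))

lemma codedPoint_mem_Ioo (hw : ∀ k, IsBlock (w k)) : codedPoint w ∈ Ioo (0 : ℝ) 1 :=
  Icc_subset_Ioo (by norm_num) (by norm_num) (codedPoint_mem hw)

lemma irrational_codedPoint (hw : ∀ k, IsBlock (w k)) : Irrational (codedPoint w) :=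
  irrational_of_forall_exists_branch fun M => ⟨prefixWord w M, _,
    codedPoint_mem_Ioo fun i => hw (M + i), codedPoint_eq_branch hw M,
    Nat.lt_two_pow_self.le.trans (two_pow_le_denom_prefixWord hw M)⟩

instance : MeasurableSpace CFWord := ⊤

instance : DiscreteMeasurableSpace CFWord := ⟨fun _ => trivial⟩

lemma measurable_prefixWord (k : ℕ) : Measurable fun w : ℕ → CFWord => prefixWord w k := by
  induction k with
  | zero => exact measurable_const
  | succ k ih =>
    simp only [prefixWord_succ]
    exact (Measurable.of_discrete (f := fun p : CFWord × CFWord => p.1 ++ p.2)).comp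
      (ih.prodMk (measurable_pi_apply k))

end Blocks

section BlockMeasures

open CFWord
open scoped Topology ENNReal

/-- Any two blocks of `A`, read after the word `g`, start expansions of numbers at distance at most
`d`, for suitable continuations in the interval `[1/2, 2/3]` containing all coded points. -/
def BlocksWithin (g : CFWord) (d : ℝ) (A : Finset CFWord) : Prop :=
  ∀ l ∈ A, ∀ l' ∈ A, ∃ z ∈ Icc (1 / 2 : ℝ) (2 / 3), ∃ z' ∈ Icc (1 / 2 : ℝ) (2 / 3),
    |branch g (branch l z) - branch g (branch l' z')| ≤ d

lemma blocksWithin_of_cylinder {E : Set (ℕ → CFWord)} (hE : ∀ v ∈ E, ∀ k, IsBlock (v k))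
    (hbdd : Bornology.IsBounded (codedPoint '' E)) {w : ℕ → CFWord} {k : ℕ}
    (hcyl : E ⊆ PiNat.cylinder w k) {A : Finset CFWord} (hA : ∀ l ∈ A, ∃ v ∈ E, v k = l) :
    BlocksWithin (prefixWord w k) (Metric.diam (codedPoint '' E)) A := by
  have hcoded : ∀ v ∈ E, codedPoint v =
      branch (prefixWord w k) (branch (v k) (codedPoint fun i => v (k + 1 + i))) := by
    intro v hv
    rw [codedPoint_eq_branch (hE v hv) (k + 1), prefixWord_succ, branch_append,
      prefixWord_congr fun i hi => hcyl hv i hi]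
  intro l hl l' hl'
  obtain ⟨v, hv, rfl⟩ := hA l hl
  obtain ⟨v', hv', rfl⟩ := hA l' hl'
  refine ⟨_, codedPoint_mem fun i => hE v hv (k + 1 + i), _,
    codedPoint_mem fun i => hE v' hv' (k + 1 + i), ?_⟩
  rw [← hcoded v hv, ← hcoded v' hv', ← Real.dist_eq]
  exact Metric.dist_le_diam_of_mem hbdd (mem_image_of_mem _ hv) (mem_image_of_mem _ hv')

lemma exists_pmf_eq_ofReal {ι : Type*} {W : Finset ι} {p : ι → ℝ} (hp : ∀ l ∈ W, 0 ≤ p l)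
    (hsum : ∑ l ∈ W, p l = 1) :
    ∃ P : PMF ι, (∀ l ∈ P.support, l ∈ W) ∧ ∀ l ∈ W, P l = ENNReal.ofReal (p l) := by
  classical
  refine ⟨PMF.ofFinset (fun l => if l ∈ W then ENNReal.ofReal (p l) else 0) W ?_
    fun l hl => if_neg hl, fun l hl => ?_, fun l hl => if_pos hl⟩
  · rw [Finset.sum_congr rfl fun l hl => if_pos hl, ← ENNReal.ofReal_sum_of_nonneg hp, hsum,
      ENNReal.ofReal_one]
  · exact by_contra fun hlW => (PMF.mem_support_iff _ _).1 hl (if_neg hlW)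

theorem ofReal_le_dimH_of_weighted_blocks {W : ℕ → Finset CFWord} {p : ℕ → CFWord → ℝ}
    {D : Set ℝ} {s C : ℝ} (hs : 0 ≤ s) (hW : ∀ k, ∀ l ∈ W k, IsBlock l)
    (hp : ∀ k, ∀ l ∈ W k, 0 ≤ p k l) (hsum : ∀ k, ∑ l ∈ W k, p k l = 1)
    (hD : ∀ w : ℕ → CFWord, (∀ k, w k ∈ W k) → codedPoint w ∈ D)
    (hprod : ∀ w : ℕ → CFWord, (∀ k, w k ∈ W k) →
      Tendsto (fun k => ∏ i ∈ Finset.range k, p i (w i)) atTop (𝓝 0))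
    (hbranch : ∀ w : ℕ → CFWord, (∀ k, w k ∈ W k) → ∀ k, ∀ A ⊆ W k, A.Nontrivial → ∀ d, 0 ≤ d →
      BlocksWithin (prefixWord w k) d A →
      (∏ i ∈ Finset.range k, p i (w i)) * ∑ l ∈ A, p k l ≤ C * d ^ s) :
    ENNReal.ofReal s ≤ dimH D := by
  classical
  choose P hsupp hPW using fun k => exists_pmf_eq_ofReal (hp k) (hsum k)
  have hPprod : ∀ w : ℕ → CFWord, (∀ k, w k ∈ W k) → ∀ k,
      ∏ i ∈ Finset.range k, P i (w i) = ENNReal.ofReal (∏ i ∈ Finset.range k, p i (w i)) := by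
    intro w hw k
    rw [ENNReal.ofReal_prod_of_nonneg fun i _ => hp i _ (hw i)]
    exact Finset.prod_congr rfl fun i _ => hPW i _ (hw i)
  refine ofReal_le_dimH_of_coding (P := P) (code := codedPoint)
    (approx := fun k w => branch (prefixWord w k) 0) (C := ENNReal.ofReal C) hs
    ENNReal.ofReal_ne_top
    (fun k => Measurable.of_discrete.comp (g := fun l => branch l 0) (measurable_prefixWord k))
    (fun w hw => ⟨hD w fun k => hsupp k _ (hw k),
      tendsto_codedPoint fun k => hW k _ (hsupp k _ (hw k))⟩) ?_ ?_
  · intro w hw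
    simp only [hPprod w fun k => hsupp k _ (hw k)]
    simpa using ENNReal.tendsto_ofReal (hprod w fun k => hsupp k _ (hw k))
  · intro E hE hbdd w hw k hcyl hnt
    have hEW : ∀ v ∈ E, ∀ k, v k ∈ W k := fun v hv k => hsupp k _ (hE v hv k)
    let A := (W k).filter fun l => ∃ v ∈ E, v k = l
    have hAE : ((fun v : ℕ → CFWord => v k) '' E) = A := by
      ext l
      simpa [A] using fun v hv hvl => hvl ▸ hEW v hv k
    have hAW : A ⊆ W k := Finset.filter_subset _ _
    rw [hAE, PMF.toMeasure_apply_finset, hPprod w (hEW w hw),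
      Finset.sum_congr rfl fun l hl => hPW k l (hAW hl),
      ← ENNReal.ofReal_sum_of_nonneg fun l hl => hp k l (hAW hl),
      ← ENNReal.ofReal_mul (Finset.prod_nonneg fun i _ => hp i _ (hEW w hw i)),
      ← ENNReal.ofReal_toReal hbdd.ediam_ne_top,
      ENNReal.ofReal_rpow_of_nonneg ENNReal.toReal_nonneg hs,
      ← ENNReal.ofReal_mul' (by positivity)]
    exact ENNReal.ofReal_le_ofReal <| hbranch w (hEW w hw) k A hAW
      (show (A : Set CFWord).Nontrivial from hAE ▸ hnt) _ ENNReal.toReal_nonneg <|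
      blocksWithin_of_cylinder (fun v hv k => hW k _ (hEW v hv k)) hbdd hcyl
        fun l hl => (Finset.mem_filter.1 hl).2

end BlockMeasures

/-! ### Marker blocks -/

section Markers

open CFWord

/-- The block `1, …, 1, a, b` with `N` leading ones. -/
def markerWord (N : ℕ) (a b : ℕ+) : CFWord := List.replicate N 1 ++ [a, b]

open Classical in
/-- The marker blocks whose last two digits are of orders `α` and `β`; inserting them makes the
product of two consecutive partial quotients large. -/
def markerWords (N : ℕ) (α β : ℕ+) : Finset CFWord :=
  (Finset.Ico α (2 * α) ×ˢ Finset.Ico β (2 * β)).image fun x => markerWord N x.1 x.2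

variable {N : ℕ} {α β a a' b b' : ℕ+} {l : CFWord}

lemma markerWord_inj : markerWord N a b = markerWord N a' b' ↔ a = a' ∧ b = b' := by
  simp [markerWord]

lemma mem_markerWords : l ∈ markerWords N α β ↔
    ∃ a ∈ Finset.Ico α (2 * α), ∃ b ∈ Finset.Ico β (2 * β), markerWord N a b = l := by
  simp [markerWords, and_assoc]

lemma card_Ico_two_mul (α : ℕ+) : (Finset.Ico α (2 * α)).card = α := by
  rw [PNat.card_Ico, PNat.mul_coe]
  exact Nat.sub_eq_of_eq_add (two_mul _)

lemma card_markerWords (N : ℕ) (α β : ℕ+) : (markerWords N α β).card = α * β := by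
  rw [markerWords, Finset.card_image_of_injective, Finset.card_product, card_Ico_two_mul,
    card_Ico_two_mul]
  rintro ⟨a, b⟩ ⟨a', b'⟩ h
  exact Prod.ext_iff.2 (markerWord_inj.1 h)

lemma length_markerWord (N : ℕ) (a b : ℕ+) : (markerWord N a b).length = N + 2 := by
  simp [markerWord]

lemma isBlock_markerWord (hN : 2 ≤ N) (a b : ℕ+) : IsBlock (markerWord N a b) := by
  obtain ⟨M, rfl⟩ := Nat.exists_eq_add_of_le' hN
  exact ⟨List.replicate M 1 ++ [a, b], by simp [markerWord, List.replicate_succ]⟩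

lemma isBlock_of_mem_markerWords (hN : 2 ≤ N) (hl : l ∈ markerWords N α β) : IsBlock l := by
  obtain ⟨a, -, b, -, rfl⟩ := mem_markerWords.1 hl
  exact isBlock_markerWord hN a b

lemma length_of_mem_markerWords (hl : l ∈ markerWords N α β) : l.length = N + 2 := by
  obtain ⟨a, -, b, -, rfl⟩ := mem_markerWords.1 hl
  exact length_markerWord N a b

lemma denom_le_of_mem_markerWords (hl : l ∈ markerWords N α β) :
    (denom l : ℝ) ≤ 16 * denom (List.replicate N (1 : ℕ+)) * (α * β) := by
  obtain ⟨a, ha, b, hb, rfl⟩ := mem_markerWords.1 hl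
  have ha' : (a : ℕ) ≤ 2 * α := (Finset.mem_Ico.1 ha).2.le
  have hb' : (b : ℕ) ≤ 2 * β := (Finset.mem_Ico.1 hb).2.le
  have hab : denom [a, b] ≤ 8 * (α * β) := by
    have h1 : 1 ≤ (α : ℕ) * β := Nat.mul_le_mul α.pos β.pos
    have h4 : (a : ℕ) * b ≤ (2 * α) * (2 * β) := Nat.mul_le_mul ha' hb'
    simp only [denom_cons, denom_nil, num_cons, num_nil]
    nlinarith
  have : denom (markerWord N a b) ≤ 16 * denom (List.replicate N (1 : ℕ+)) * (α * β) := calc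
    _ ≤ 2 * (denom (List.replicate N (1 : ℕ+)) * denom [a, b]) := denom_append_le _ _
    _ ≤ 2 * (denom (List.replicate N (1 : ℕ+)) * (8 * (α * β))) := by gcongr
    _ = _ := by ring
  exact_mod_cast this

lemma branch_singleton (a : ℕ+) (t : ℝ) : branch [a] t = ((a : ℝ) + t)⁻¹ := rfl

lemma abs_sub_le_of_branch_singleton {t t' : ℝ} (ha : a < 2 * α) (ha' : a' < 2 * α)
    (ht : t ∈ Icc (0 : ℝ) 1) (ht' : t' ∈ Icc (0 : ℝ) 1) (htt : |t - t'| ≤ 1 / 2) :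
    |(a : ℝ) - a'| ≤ 8 * (α : ℝ) ^ 2 * |branch [a] t - branch [a'] t'| := by
  rcases eq_or_ne a a' with rfl | hne
  · simp only [sub_self, abs_zero]
    positivity
  have hone : (1 : ℝ) ≤ |(a : ℝ) - a'| := by
    have : (1 : ℤ) ≤ |(a : ℤ) - a'| :=
      Int.one_le_abs (sub_ne_zero.2 (by exact_mod_cast hne))
    exact_mod_cast this
  have hle : ∀ {c : ℕ+} {u : ℝ}, c < 2 * α → u ∈ Icc (0 : ℝ) 1 →
      0 < (c : ℝ) + u ∧ (c : ℝ) + u ≤ 2 * α := by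
    intro c u hc hu
    have : (c : ℝ) + 1 ≤ 2 * α := by exact_mod_cast (show (c : ℕ) + 1 ≤ 2 * α from hc)
    exact ⟨by linarith [one_le_coe c, hu.1], by linarith [hu.2]⟩
  obtain ⟨hpos, hα⟩ := hle ha ht
  obtain ⟨hpos', hα'⟩ := hle ha' ht'
  have hhalf : |(a : ℝ) - a'| / 2 ≤ |(a' + t') - (a + t)| := by
    have := abs_sub_abs_le_abs_sub ((a' : ℝ) - a) (t - t')
    rw [abs_sub_comm (a' : ℝ) a, show (a' : ℝ) - a - (t - t') = (a' + t') - (a + t) by ring] at this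
    linarith
  rw [branch_singleton, branch_singleton, inv_sub_inv hpos.ne' hpos'.ne', abs_div,
    abs_of_pos (mul_pos hpos hpos'), mul_div_assoc', le_div_iff₀ (mul_pos hpos hpos')]
  calc |(a : ℝ) - a'| * ((a + t) * (a' + t')) ≤ |(a : ℝ) - a'| * ((2 * α) * (2 * α)) := by gcongr
    _ = 8 * (α : ℝ) ^ 2 * (|(a : ℝ) - a'| / 2) := by ring
    _ ≤ _ := by gcongr

lemma branch_singleton_mem {z : ℝ} (hb : 2 ≤ b) (hz : z ∈ Icc (1 / 2 : ℝ) (2 / 3)) :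
    branch [b] z ∈ Icc (0 : ℝ) (2 / 5) := by
  have hb' : (2 : ℝ) ≤ b := by exact_mod_cast (show 2 ≤ (b : ℕ) from hb)
  rw [branch_singleton]
  exact ⟨by linarith [inv_pos.2 (show 0 < (b : ℝ) + z by linarith [hz.1])],
    (inv_anti₀ (by norm_num) (show (5 / 2 : ℝ) ≤ b + z by linarith [hz.1])).trans (by norm_num)⟩

lemma branch_markerWord (g : CFWord) (N : ℕ) (a b : ℕ+) (z : ℝ) :
    branch g (branch (markerWord N a b) z) =
      branch (g ++ List.replicate N 1) (branch [a] (branch [b] z)) := by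
  rw [markerWord, branch_append _ [a, b], branch_append g, ← branch_append [a] [b],
    List.singleton_append]

variable {g : CFWord} {z z' d : ℝ}

lemma abs_fst_sub_le_of_branch_markerWord (ha : a < 2 * α) (ha' : a' < 2 * α) (hb : 2 ≤ b)
    (hb' : 2 ≤ b') (hz : z ∈ Icc (1 / 2 : ℝ) (2 / 3)) (hz' : z' ∈ Icc (1 / 2 : ℝ) (2 / 3))
    (hd : |branch g (branch (markerWord N a b) z) -
      branch g (branch (markerWord N a' b') z')| ≤ d) :
    |(a : ℝ) - a'| ≤
      128 * (denom (List.replicate N (1 : ℕ+)) : ℝ) ^ 2 * (denom g : ℝ) ^ 2 * (α : ℝ) ^ 2 * d := by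
  obtain ⟨h0, h1⟩ := branch_singleton_mem hb hz
  obtain ⟨h0', h1'⟩ := branch_singleton_mem hb' hz'
  have hmem : branch [b] z ∈ Icc (0 : ℝ) 1 := ⟨h0, by linarith⟩
  have hmem' : branch [b'] z' ∈ Icc (0 : ℝ) 1 := ⟨h0', by linarith⟩
  rw [branch_markerWord, branch_markerWord] at hd
  have hdenom : (denom (g ++ List.replicate N 1) : ℝ) ≤
      2 * (denom g * denom (List.replicate N (1 : ℕ+))) := by exact_mod_cast denom_append_le _ _
  have hd0 := (abs_nonneg _).trans hd
  calc |(a : ℝ) - a'|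
      ≤ 8 * (α : ℝ) ^ 2 * |branch [a] (branch [b] z) - branch [a'] (branch [b'] z')| :=
        abs_sub_le_of_branch_singleton ha ha' hmem hmem'
          (abs_le.2 ⟨by linarith, by linarith⟩)
    _ ≤ 8 * (α : ℝ) ^ 2 * (d * (4 * (2 * (denom g * denom (List.replicate N (1 : ℕ+)))) ^ 2)) := by
        gcongr
        refine (abs_sub_le_abs_branch_sub_mul (g ++ List.replicate N 1)
          (branch_mem_Icc _ hmem) (branch_mem_Icc _ hmem')).trans ?_
        gcongr
    _ = _ := by ring

lemma abs_snd_sub_le_of_branch_markerWord (ha : a < 2 * α) (hb : b < 2 * β) (hb' : b' < 2 * β)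
    (hz : z ∈ Icc (1 / 2 : ℝ) (2 / 3)) (hz' : z' ∈ Icc (1 / 2 : ℝ) (2 / 3))
    (hd : |branch g (branch (markerWord N a b) z) - branch g (branch (markerWord N a b') z')| ≤ d) :
    |(b : ℝ) - b'| ≤ 2048 * (denom (List.replicate N (1 : ℕ+)) : ℝ) ^ 2 * (denom g : ℝ) ^ 2 *
      (α : ℝ) ^ 2 * (β : ℝ) ^ 2 * d := by
  have hunit : Icc (1 / 2 : ℝ) (2 / 3) ⊆ Icc 0 1 := Icc_subset_Icc (by norm_num) (by norm_num)
  rw [branch_markerWord, branch_markerWord, ← branch_append _ [a], ← branch_append _ [a]] at hd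
  have hdenom : (denom (g ++ List.replicate N 1 ++ [a]) : ℝ) ≤
      8 * (denom g * denom (List.replicate N (1 : ℕ+)) * α) := by
    have : denom (g ++ List.replicate N 1 ++ [a]) ≤
        2 * (2 * (denom g * denom (List.replicate N (1 : ℕ+))) * (2 * α)) := by
      refine (denom_append_le _ _).trans ?_
      gcongr
      · exact denom_append_le _ _
      · simpa using (show (a : ℕ) ≤ 2 * α from ha.le)
    calc _ ≤ (2 * (2 * (denom g * denom (List.replicate N (1 : ℕ+))) * (2 * α)) : ℝ) := by
          exact_mod_cast this
      _ = _ := by ring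
  have hd0 := (abs_nonneg _).trans hd
  calc |(b : ℝ) - b'| ≤ 8 * (β : ℝ) ^ 2 * |branch [b] z - branch [b'] z'| :=
        abs_sub_le_of_branch_singleton hb hb' (hunit hz) (hunit hz')
          (abs_le.2 ⟨by linarith [hz.1, hz'.2], by linarith [hz.2, hz'.1]⟩)
    _ ≤ 8 * (β : ℝ) ^ 2 *
          (d * (4 * (8 * (denom g * denom (List.replicate N (1 : ℕ+)) * α)) ^ 2)) := by
        gcongr
        refine (abs_sub_le_abs_branch_sub_mul (g ++ List.replicate N 1 ++ [a])
          (branch_mem_Icc _ (hunit hz)) (branch_mem_Icc _ (hunit hz'))).trans ?_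
        gcongr
    _ = _ := by ring

lemma le_rpow_of_le_of_le_one {x y s : ℝ} (hx : 0 ≤ x) (hs : 0 ≤ s) (hs1 : s ≤ 1) (hyx : y ≤ x)
    (hy : y ≤ 1) : y ≤ x ^ s := by
  rcases le_total x 1 with h | h
  · exact hyx.trans (Real.self_le_rpow_of_le_one hx h hs1)
  · exact hy.trans (Real.one_le_rpow h hs)

lemma card_le_three_mul {S : Finset ℕ+} {R : ℝ} (hS : S.Nontrivial)
    (hR : ∀ a ∈ S, ∀ a' ∈ S, |(a : ℝ) - a'| ≤ R) : (S.card : ℝ) ≤ 3 * R := by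
  obtain ⟨a₀, ha₀, a₁, ha₁, hne⟩ := hS
  have hR1 : 1 ≤ R := by
    have : (1 : ℤ) ≤ |(a₀ : ℤ) - a₁| := Int.one_le_abs (sub_ne_zero.2 (by exact_mod_cast hne))
    exact le_trans (by exact_mod_cast this) (hR a₀ ha₀ a₁ ha₁)
  have hsub : S.image (fun a : ℕ+ => (a : ℤ)) ⊆ Finset.Icc (a₀ - ⌊R⌋) (a₀ + ⌊R⌋) := by
    intro m hm
    obtain ⟨a, ha, rfl⟩ := Finset.mem_image.1 hm
    have h : |(a : ℤ) - a₀| ≤ ⌊R⌋ :=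
      Int.le_floor.2 (by exact_mod_cast hR a ha a₀ ha₀)
    exact Finset.mem_Icc.2 ⟨by linarith [(abs_le.1 h).1], by linarith [(abs_le.1 h).2]⟩
  have hcard := Finset.card_le_card hsub
  rw [Finset.card_image_of_injective _ fun a a' h => by exact_mod_cast h, Int.card_Icc] at hcard
  have hfloor : (0 : ℤ) ≤ ⌊R⌋ := Int.floor_nonneg.2 (by linarith)
  have : (S.card : ℤ) ≤ 2 * ⌊R⌋ + 1 := by omega
  have : (S.card : ℝ) ≤ 2 * ⌊R⌋ + 1 := by exact_mod_cast this
  linarith [Int.floor_le R]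

lemma card_div_le_rpow {S : Finset ℕ+} {R s : ℝ} (hs : 0 ≤ s) (hs1 : s ≤ 1)
    (hSα : S ⊆ Finset.Ico α (2 * α)) (hS : S.Nontrivial)
    (hR : ∀ a ∈ S, ∀ a' ∈ S, |(a : ℝ) - a'| ≤ R) : (S.card : ℝ) / α ≤ (3 * R / α) ^ s := by
  have hα : (0 : ℝ) < α := by exact_mod_cast α.pos
  have hcard := card_le_three_mul hS hR
  have hR0 : 0 ≤ 3 * R := (Nat.cast_nonneg S.card).trans hcard
  refine le_rpow_of_le_of_le_one (by positivity) hs hs1 (by gcongr) ?_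
  rw [div_le_one hα]
  exact_mod_cast (Finset.card_le_card hSα).trans (card_Ico_two_mul α).le

variable {A : Finset CFWord} {s : ℝ}

lemma card_div_le_rpow_of_fst_ne (hs : 0 ≤ s) (hs1 : s ≤ 1) (hβ : 2 ≤ β)
    (hA : A ⊆ markerWords N α β) (hd : BlocksWithin g d A) (hab : markerWord N a b ∈ A)
    (hab' : markerWord N a' b' ∈ A) (hne : a ≠ a') :
    (A.card : ℝ) / (α * β) ≤
      (384 * (denom (List.replicate N (1 : ℕ+)) : ℝ) ^ 2 * (denom g : ℝ) ^ 2 * α * d) ^ s := by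
  classical
  have : (0 : ℝ) < α := by exact_mod_cast α.pos
  have hβ0 : (0 : ℝ) < β := by exact_mod_cast β.pos
  have hIco : ∀ {a b}, markerWord N a b ∈ A →
      a ∈ Finset.Ico α (2 * α) ∧ b ∈ Finset.Ico β (2 * β) := by
    intro a b h
    obtain ⟨a', ha', b', hb', e⟩ := mem_markerWords.1 (hA h)
    obtain ⟨rfl, rfl⟩ := markerWord_inj.1 e
    exact ⟨ha', hb'⟩
  let S := (Finset.Ico α (2 * α)).filter fun a => ∃ b, markerWord N a b ∈ A
  have hmemS : ∀ {a b}, markerWord N a b ∈ A → a ∈ S := fun h =>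
    Finset.mem_filter.2 ⟨(hIco h).1, _, h⟩
  have hsub : A ⊆ (S ×ˢ Finset.Ico β (2 * β)).image fun x => markerWord N x.1 x.2 := by
    intro l hl
    obtain ⟨a, -, b, hb, rfl⟩ := mem_markerWords.1 (hA hl)
    exact Finset.mem_image.2 ⟨(a, b), Finset.mem_product.2 ⟨hmemS hl, hb⟩, rfl⟩
  have hcard : A.card ≤ S.card * β := by
    simpa only [Finset.card_product, card_Ico_two_mul] using
      (Finset.card_le_card hsub).trans Finset.card_image_le
  have hsep : ∀ a ∈ S, ∀ a' ∈ S, |(a : ℝ) - a'| ≤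
      128 * (denom (List.replicate N (1 : ℕ+)) : ℝ) ^ 2 * (denom g : ℝ) ^ 2 * α ^ 2 * d := by
    intro a ha a' ha'
    obtain ⟨ha, b, hab⟩ := Finset.mem_filter.1 ha
    obtain ⟨ha', b', hab'⟩ := Finset.mem_filter.1 ha'
    obtain ⟨z, hz, z', hz', h⟩ := hd _ hab _ hab'
    exact abs_fst_sub_le_of_branch_markerWord (Finset.mem_Ico.1 ha).2 (Finset.mem_Ico.1 ha').2
      (hβ.trans (Finset.mem_Ico.1 (hIco hab).2).1) (hβ.trans (Finset.mem_Ico.1 (hIco hab').2).1)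
      hz hz' h
  calc (A.card : ℝ) / (α * β) ≤ (S.card * β) / (α * β) := by gcongr; exact_mod_cast hcard
    _ = S.card / α := mul_div_mul_right _ _ hβ0.ne'
    _ ≤ _ := card_div_le_rpow hs hs1 (Finset.filter_subset _ _)
      ⟨a, hmemS hab, a', hmemS hab', hne⟩ hsep
    _ = _ := by congr 1; field_simp; ring

lemma card_div_le_rpow_of_fst_eq (hs : 0 ≤ s) (hs1 : s ≤ 1) (hA : A ⊆ markerWords N α β)
    (hd : BlocksWithin g d A) (hAn : A.Nontrivial) (hfst : ∀ l ∈ A, ∃ b, markerWord N a b = l) :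
    (A.card : ℝ) / (α * β) ≤ 1 / α * (6144 * (denom (List.replicate N (1 : ℕ+)) : ℝ) ^ 2 *
      (denom g : ℝ) ^ 2 * (α : ℝ) ^ 2 * β * d) ^ s := by
  classical
  have : (0 : ℝ) < α := by exact_mod_cast α.pos
  have : (0 : ℝ) < β := by exact_mod_cast β.pos
  let S := (Finset.Ico β (2 * β)).filter fun b => markerWord N a b ∈ A
  have hIco : ∀ {b}, markerWord N a b ∈ A → a < 2 * α ∧ b ∈ Finset.Ico β (2 * β) := by
    intro b h
    obtain ⟨a', ha', b', hb', e⟩ := mem_markerWords.1 (hA h)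
    obtain ⟨rfl, rfl⟩ := markerWord_inj.1 e
    exact ⟨(Finset.mem_Ico.1 ha').2, hb'⟩
  have hmemS : ∀ {b}, markerWord N a b ∈ A → b ∈ S := fun h =>
    Finset.mem_filter.2 ⟨(hIco h).2, h⟩
  have hsub : A ⊆ S.image (markerWord N a) := by
    intro l hl
    obtain ⟨b, rfl⟩ := hfst l hl
    exact Finset.mem_image_of_mem _ (hmemS hl)
  have hcard : A.card ≤ S.card := (Finset.card_le_card hsub).trans Finset.card_image_le
  have hSn : S.Nontrivial := by
    obtain ⟨l, hl, l', hl', hne⟩ := hAn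
    obtain ⟨b, rfl⟩ := hfst l hl
    obtain ⟨b', rfl⟩ := hfst l' hl'
    exact ⟨b, hmemS hl, b', hmemS hl', fun h => hne (h ▸ rfl)⟩
  have hsep : ∀ b ∈ S, ∀ b' ∈ S, |(b : ℝ) - b'| ≤ 2048 *
      (denom (List.replicate N (1 : ℕ+)) : ℝ) ^ 2 * (denom g : ℝ) ^ 2 * α ^ 2 * β ^ 2 * d := by
    intro b hb b' hb'
    obtain ⟨hb, hab⟩ := Finset.mem_filter.1 hb
    obtain ⟨hb', hab'⟩ := Finset.mem_filter.1 hb'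
    obtain ⟨z, hz, z', hz', h⟩ := hd _ hab _ hab'
    exact abs_snd_sub_le_of_branch_markerWord (hIco hab).1 (Finset.mem_Ico.1 hb).2
      (Finset.mem_Ico.1 hb').2 hz hz' h
  calc (A.card : ℝ) / (α * β) ≤ S.card / (α * β) := by gcongr
    _ = 1 / α * (S.card / β) := by field_simp
    _ ≤ 1 / α * _ := mul_le_mul_of_nonneg_left
      (card_div_le_rpow hs hs1 (Finset.filter_subset _ _) hSn hsep) (by positivity)
    _ = _ := by congr 2; field_simp; ring

lemma card_div_le_mul_rpow {M : ℝ} (hs : 0 ≤ s) (hs1 : s ≤ 1) (hβ : 2 ≤ β) (hd : 0 ≤ d)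
    (hα : (α : ℝ) ^ s ≤ M) (hαβ : (α : ℝ) ^ (2 * s - 1) * (β : ℝ) ^ s ≤ M)
    (hA : A ⊆ markerWords N α β) (hAn : A.Nontrivial) (hAd : BlocksWithin g d A) :
    A.card / ((α : ℝ) * β) ≤ M *
      (6144 * (denom (List.replicate N (1 : ℕ+)) : ℝ) ^ 2 * (denom g : ℝ) ^ 2 * d) ^ s := by
  have hα0 : (0 : ℝ) < α := by exact_mod_cast α.pos
  have hβ0 : (0 : ℝ) < β := by exact_mod_cast β.pos
  set q : ℝ := (denom g : ℝ)
  set H : ℝ := (denom (List.replicate N (1 : ℕ+)) : ℝ)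
  by_cases hfst : ∃ a b a' b', markerWord N a b ∈ A ∧ markerWord N a' b' ∈ A ∧ a ≠ a'
  · obtain ⟨a, b, a', b', hab, hab', hne⟩ := hfst
    calc A.card / ((α : ℝ) * β) ≤ (384 * H ^ 2 * q ^ 2 * α * d) ^ s :=
          card_div_le_rpow_of_fst_ne hs hs1 hβ hA hAd hab hab' hne
      _ = (α : ℝ) ^ s * (384 * H ^ 2 * q ^ 2 * d) ^ s := by
          rw [← Real.mul_rpow hα0.le (by positivity)]
          ring_nf
      _ ≤ M * (6144 * H ^ 2 * q ^ 2 * d) ^ s := by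
          have hM : 0 ≤ M := (by positivity : (0 : ℝ) ≤ α ^ s).trans hα
          gcongr
          norm_num
  · push Not at hfst
    obtain ⟨l, hl, -⟩ := id hAn
    obtain ⟨a, -, b, -, rfl⟩ := mem_markerWords.1 (hA hl)
    have hfst' : ∀ l' ∈ A, ∃ b', markerWord N a b' = l' := by
      intro l' hl'
      obtain ⟨a', -, b', -, rfl⟩ := mem_markerWords.1 (hA hl')
      exact ⟨b', by rw [hfst a b a' b' hl hl']⟩
    have hα2 : (α : ℝ) ^ (2 * s - 1) = 1 / α * ((α : ℝ) ^ 2) ^ s := by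
      rw [Real.rpow_sub_one hα0.ne', ← Real.rpow_natCast, ← Real.rpow_mul hα0.le]
      norm_num
      ring
    calc A.card / ((α : ℝ) * β) ≤ 1 / α * (6144 * H ^ 2 * q ^ 2 * (α : ℝ) ^ 2 * β * d) ^ s :=
          card_div_le_rpow_of_fst_eq hs hs1 hA hAd hAn hfst'
      _ = (α : ℝ) ^ (2 * s - 1) * (β : ℝ) ^ s * (6144 * H ^ 2 * q ^ 2 * d) ^ s := by
          rw [hα2, mul_assoc (1 / (α : ℝ)), mul_assoc (1 / (α : ℝ)),
            ← Real.mul_rpow (by positivity) hβ0.le, ← Real.mul_rpow (by positivity) (by positivity)]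
          ring_nf
      _ ≤ M * (6144 * H ^ 2 * q ^ 2 * d) ^ s := by gcongr

end Markers

section BlockWeights

open CFWord
open scoped Topology

/-- A probability weight `p` on a finite set `W` of blocks, together with the two bounds that
control the mass distribution it generates: `ρ` bounds the mass of a block relative to the
`s`-th power of the squared inverse of its denominator, and `K` is the Frostman constant of the
branching into the blocks of `W` after an arbitrary word `g`. -/
structure IsBlockWeight (s K ρ : ℝ) (W : Finset CFWord) (p : CFWord → ℝ) : Prop where
  isBlock : ∀ l ∈ W, IsBlock l
  nonneg : ∀ l ∈ W, 0 ≤ p l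
  sum_eq_one : ∑ l ∈ W, p l = 1
  mul_rpow_le : ∀ l ∈ W, p l * (2 * denom l : ℝ) ^ (2 * s) ≤ ρ
  sum_le : ∀ g d, 0 ≤ d → ∀ A ⊆ W, A.Nontrivial → BlocksWithin g d A →
    ∑ l ∈ A, p l ≤ K * ((denom g : ℝ) ^ 2 * d) ^ s

variable {s : ℝ}

section Products

variable {K ρ c : ℕ → ℝ} {W : ℕ → Finset CFWord} {p : ℕ → CFWord → ℝ} {w : ℕ → CFWord}

lemma prod_mul_denom_rpow_le (hs : 0 ≤ s) (hp : ∀ k, IsBlockWeight s (K k) (ρ k) (W k) (p k))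
    (hc₀ : c 0 = 1) (hc : ∀ k, c (k + 1) = c k * ρ k) (hcpos : ∀ k, 0 ≤ c k)
    (hw : ∀ k, w k ∈ W k) (k : ℕ) :
    (∏ i ∈ Finset.range k, p i (w i)) * (denom (prefixWord w k) : ℝ) ^ (2 * s) ≤ c k := by
  induction k with
  | zero => simp [hc₀]
  | succ k ih =>
    have hdenom : (denom (prefixWord w (k + 1)) : ℝ) ≤
        denom (prefixWord w k) * (2 * denom (w k)) := by
      have := denom_append_le (prefixWord w k) (w k)
      rw [← prefixWord_succ] at this
      exact_mod_cast this.trans_eq (by ring)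
    have hpk := (hp k).nonneg _ (hw k)
    have hprod : 0 ≤ ∏ i ∈ Finset.range k, p i (w i) :=
      Finset.prod_nonneg fun i _ => (hp i).nonneg _ (hw i)
    rw [Finset.prod_range_succ, hc]
    calc _ ≤ (∏ i ∈ Finset.range k, p i (w i)) * p k (w k) *
          (denom (prefixWord w k) * (2 * denom (w k))) ^ (2 * s) := by gcongr
      _ = (∏ i ∈ Finset.range k, p i (w i)) * (denom (prefixWord w k) : ℝ) ^ (2 * s) *
          (p k (w k) * (2 * denom (w k)) ^ (2 * s)) := by
        rw [Real.mul_rpow (by positivity) (by positivity)]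
        ring
      _ ≤ c k * ρ k := mul_le_mul ih ((hp k).mul_rpow_le _ (hw k)) (by positivity) (hcpos k)

lemma tendsto_prod_of_isBlockWeight {M : ℝ} (hs : 0 < s)
    (hp : ∀ k, IsBlockWeight s (K k) (ρ k) (W k) (p k)) (hc₀ : c 0 = 1)
    (hc : ∀ k, c (k + 1) = c k * ρ k) (hcpos : ∀ k, 0 ≤ c k) (hcM : ∀ k, c k ≤ M)
    (hw : ∀ k, w k ∈ W k) :
    Tendsto (fun k => ∏ i ∈ Finset.range k, p i (w i)) atTop (𝓝 0) := by
  have hgeom : Tendsto (fun k : ℕ => M / ((2 : ℝ) ^ (2 * s)) ^ k) atTop (𝓝 0) :=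
    (tendsto_pow_atTop_atTop_of_one_lt
      (Real.one_lt_rpow one_lt_two (by positivity))).const_div_atTop M
  refine squeeze_zero (fun k => Finset.prod_nonneg fun i _ => (hp i).nonneg _ (hw i))
    (fun k => ?_) hgeom
  have hpow : (2 : ℝ) ^ k ≤ denom (prefixWord w k) := by
    exact_mod_cast two_pow_le_denom_prefixWord (fun k => (hp k).isBlock _ (hw k)) k
  rw [le_div_iff₀ (by positivity), Real.rpow_pow_comm zero_le_two]
  calc _ ≤ (∏ i ∈ Finset.range k, p i (w i)) * (denom (prefixWord w k) : ℝ) ^ (2 * s) := by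
        have : 0 ≤ ∏ i ∈ Finset.range k, p i (w i) :=
          Finset.prod_nonneg fun i _ => (hp i).nonneg _ (hw i)
        gcongr
    _ ≤ M := (prod_mul_denom_rpow_le hs.le hp hc₀ hc hcpos hw k).trans (hcM k)

theorem ofReal_le_dimH_of_isBlockWeight {M C : ℝ} {D : Set ℝ} (hs : 0 < s)
    (hp : ∀ k, IsBlockWeight s (K k) (ρ k) (W k) (p k)) (hc₀ : c 0 = 1)
    (hc : ∀ k, c (k + 1) = c k * ρ k) (hcpos : ∀ k, 0 ≤ c k) (hcM : ∀ k, c k ≤ M)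
    (hcK : ∀ k, c k * K k ≤ C)
    (hD : ∀ w : ℕ → CFWord, (∀ k, w k ∈ W k) → codedPoint w ∈ D) :
    ENNReal.ofReal s ≤ dimH D := by
  refine ofReal_le_dimH_of_weighted_blocks (C := C) hs.le (fun k => (hp k).isBlock)
    (fun k => (hp k).nonneg) (fun k => (hp k).sum_eq_one) hD
    (fun w hw => tendsto_prod_of_isBlockWeight hs hp hc₀ hc hcpos hcM hw) ?_
  intro w hw k A hA hAn d hd hAd
  have hprod : 0 ≤ ∏ i ∈ Finset.range k, p i (w i) :=
    Finset.prod_nonneg fun i _ => (hp i).nonneg _ (hw i)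
  have hsum := (hp k).sum_le _ d hd A hA hAn hAd
  have hKd : 0 ≤ K k * d ^ s := by
    have hq : (0 : ℝ) < denom (prefixWord w k) := by exact_mod_cast denom_pos _
    have h0 := (Finset.sum_nonneg fun l hl => (hp k).nonneg l (hA hl)).trans hsum
    rw [Real.mul_rpow (by positivity) hd, mul_left_comm] at h0
    exact nonneg_of_mul_nonneg_right h0 (by positivity)
  calc (∏ i ∈ Finset.range k, p i (w i)) * ∑ l ∈ A, p k l
      ≤ (∏ i ∈ Finset.range k, p i (w i)) *
          (K k * ((denom (prefixWord w k) : ℝ) ^ 2 * d) ^ s) := by gcongr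
    _ = (∏ i ∈ Finset.range k, p i (w i)) * (denom (prefixWord w k) : ℝ) ^ (2 * s) *
          (K k * d ^ s) := by
        rw [Real.mul_rpow (by positivity) hd, ← Real.rpow_natCast, ← Real.rpow_mul (by positivity)]
        push_cast
        ring
    _ ≤ c k * (K k * d ^ s) := mul_le_mul_of_nonneg_right
        (prod_mul_denom_rpow_le hs.le hp hc₀ hc hcpos hw k) hKd
    _ ≤ C * d ^ s := by
        rw [← mul_assoc]
        exact mul_le_mul_of_nonneg_right (hcK k) (by positivity)

end Products

theorem isBlockWeight_markerWords {N : ℕ} {α β : ℕ+} {M : ℝ} (hs : 0 ≤ s) (hs1 : s ≤ 1)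
    (hN : 2 ≤ N) (hβ : 2 ≤ β) (hα : (α : ℝ) ^ s ≤ M)
    (hαβ : (α : ℝ) ^ (2 * s - 1) * (β : ℝ) ^ s ≤ M) :
    IsBlockWeight s (M * (6144 * (denom (List.replicate N (1 : ℕ+)) : ℝ) ^ 2) ^ s)
      ((32 * denom (List.replicate N (1 : ℕ+)) : ℝ) ^ (2 * s) * ((α : ℝ) * β) ^ (2 * s - 1))
      (markerWords N α β) fun _ => 1 / ((α : ℝ) * β) where
  isBlock _ hl := isBlock_of_mem_markerWords hN hl
  nonneg _ _ := by positivity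
  sum_eq_one := by
    have hαβ0 : ((α : ℝ) * β) ≠ 0 := by positivity
    rw [Finset.sum_const, card_markerWords, nsmul_eq_mul, Nat.cast_mul]
    exact mul_one_div_cancel hαβ0
  mul_rpow_le l hl := by
    set H : ℝ := (denom (List.replicate N (1 : ℕ+)) : ℝ)
    have hαβ0 : 0 < (α : ℝ) * β := by positivity
    calc 1 / ((α : ℝ) * β) * (2 * denom l : ℝ) ^ (2 * s)
        ≤ 1 / ((α : ℝ) * β) * (32 * H * (α * β)) ^ (2 * s) := by
          gcongr 1 / _ * ?_ ^ _
          linarith [denom_le_of_mem_markerWords hl]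
      _ = (32 * H) ^ (2 * s) * ((α : ℝ) * β) ^ (2 * s - 1) := by
          rw [Real.mul_rpow (by positivity) hαβ0.le, Real.rpow_sub_one hαβ0.ne']
          ring
  sum_le g d hd A hA hAn hAd := by
    rw [Finset.sum_const, nsmul_eq_mul, mul_one_div, mul_assoc M,
      ← Real.mul_rpow (by positivity) (by positivity), ← mul_assoc]
    exact card_div_le_mul_rpow hs hs1 hβ hd hα hαβ hA hAn hAd

lemma exists_forall_le_abs_branch_sub {n : ℕ} {F : Finset CFWord} (hF : ∀ l ∈ F, l.length = n) :
    ∃ ε > 0, ∀ l ∈ F, ∀ l' ∈ F, l ≠ l' → ∀ z ∈ Icc (1 / 2 : ℝ) (2 / 3),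
      ∀ z' ∈ Icc (1 / 2 : ℝ) (2 / 3), ε ≤ |branch l z - branch l' z'| := by
  have hIoo : Icc (1 / 2 : ℝ) (2 / 3) ⊆ Ioo 0 1 := Icc_subset_Ioo (by norm_num) (by norm_num)
  have hpair : ∀ x ∈ F ×ˢ F, x.1 ≠ x.2 → ∃ ε > 0, ∀ y ∈ Icc (1 / 2 : ℝ) (2 / 3) ×ˢ
      Icc (1 / 2 : ℝ) (2 / 3), ε ≤ |branch x.1 y.1 - branch x.2 y.2| := by
    rintro ⟨l, l'⟩ hx hne
    obtain ⟨hl, hl'⟩ := Finset.mem_product.1 hx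
    refine (isCompact_Icc.prod isCompact_Icc).exists_forall_le' (a := 0) ?_ fun y hy =>
      abs_pos.2 (sub_ne_zero.2 fun h => hne (eq_of_branch_eq_branch
        ((hF l hl).trans (hF l' hl').symm) (hIoo hy.1) (hIoo hy.2) h))
    have hsub := hIoo.trans Ioo_subset_Icc_self
    exact (((branch_continuousOn l).comp continuousOn_fst fun y hy => hsub hy.1).sub
      ((branch_continuousOn l').comp continuousOn_snd fun y hy => hsub hy.2)).abs
  have hall : ∀ᶠ ε in 𝓝[>] (0 : ℝ), ∀ x ∈ F ×ˢ F, x.1 ≠ x.2 → ∀ y ∈ Icc (1 / 2 : ℝ) (2 / 3) ×ˢ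
      Icc (1 / 2 : ℝ) (2 / 3), ε ≤ |branch x.1 y.1 - branch x.2 y.2| := by
    refine (Filter.eventually_all_finset _).2 fun x hx => ?_
    by_cases hne : x.1 = x.2
    · exact .of_forall fun ε h => absurd hne h
    · obtain ⟨ε, hε, h⟩ := hpair x hx hne
      filter_upwards [Ioc_mem_nhdsGT hε] with ε' hε' _ y hy using hε'.2.trans (h y hy)
  obtain ⟨ε, h, hε⟩ := (hall.and self_mem_nhdsWithin).exists
  exact ⟨ε, hε, fun l hl l' hl' hne z hz z' hz' =>
    h (l, l') (Finset.mem_product.2 ⟨hl, hl'⟩) hne (z, z') ⟨hz, hz'⟩⟩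

theorem exists_isBlockWeight_of_length_eq {n : ℕ} {F : Finset CFWord} {ρ : ℝ} (hs : 0 ≤ s)
    (hF : ∀ l ∈ F, IsBlock l) (hlen : ∀ l ∈ F, l.length = n) (hFne : F.Nonempty)
    (hρ : 4 ^ s ≤ ρ * ∑ l ∈ F, (denom l : ℝ) ^ (-(2 * s))) :
    ∃ K p, 0 ≤ K ∧ IsBlockWeight s K ρ F p := by
  obtain ⟨ε, hε, hsep⟩ := exists_forall_le_abs_branch_sub hlen
  set Z := ∑ l ∈ F, (denom l : ℝ) ^ (-(2 * s))
  have hdenom : ∀ l, (0 : ℝ) < denom l := fun l => by exact_mod_cast denom_pos l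
  have hZ : 0 < Z := Finset.sum_pos (fun l _ => Real.rpow_pos_of_pos (hdenom l) _) hFne
  have hnonneg : ∀ l ∈ F, 0 ≤ (denom l : ℝ) ^ (-(2 * s)) / Z := fun l _ => by positivity
  have hsum : ∑ l ∈ F, (denom l : ℝ) ^ (-(2 * s)) / Z = 1 := by
    rw [← Finset.sum_div, div_self hZ.ne']
  refine ⟨(4 / ε) ^ s, fun l => (denom l : ℝ) ^ (-(2 * s)) / Z, by positivity, hF, hnonneg, hsum,
    fun l _ => ?_, fun g d hd A hA hAn hAd => ?_⟩
  · have h4 : (2 : ℝ) ^ (2 * s) = 4 ^ s := by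
      rw [Real.rpow_mul zero_le_two]
      norm_num
    rw [Real.mul_rpow zero_le_two (hdenom l).le, h4, Real.rpow_neg (hdenom l).le]
    have := (Real.rpow_pos_of_pos (hdenom l) (2 * s)).ne'
    calc _ = 4 ^ s / Z := by field_simp
      _ ≤ ρ := (div_le_iff₀ hZ).2 hρ
  · obtain ⟨l, hl, l', hl', hne⟩ := hAn
    obtain ⟨z, hz, z', hz', hle⟩ := hAd l hl l' hl'
    have hunit : Icc (1 / 2 : ℝ) (2 / 3) ⊆ Icc 0 1 := Icc_subset_Icc (by norm_num) (by norm_num)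
    have hεd : ε ≤ d * (4 * (denom g : ℝ) ^ 2) := calc
      ε ≤ |branch l z - branch l' z'| := hsep l (hA hl) l' (hA hl') hne z hz z' hz'
      _ ≤ |branch g (branch l z) - branch g (branch l' z')| * (4 * (denom g : ℝ) ^ 2) :=
        abs_sub_le_abs_branch_sub_mul g (branch_mem_Icc l (hunit hz))
          (branch_mem_Icc l' (hunit hz'))
      _ ≤ _ := by gcongr
    rw [← Real.mul_rpow (by positivity) (by positivity)]
    calc _ ≤ (1 : ℝ) := hsum ▸ Finset.sum_le_sum_of_subset_of_nonneg hA fun l hl _ => hnonneg l hl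
      _ ≤ _ := Real.one_le_rpow
        (by rw [div_mul_eq_mul_div, one_le_div hε]; linarith) hs

end BlockWeights

/-! ### Greedy insertion of markers -/

section GreedyInsertion

/-- The mass constant after `k` greedy steps: it is multiplied by `u k` (a marker is inserted) when
the budget `c k * E k ≤ 1` allows it, and by the rate `r` of a free block otherwise. -/
noncomputable def greedyMass (E u : ℕ → ℝ) (r : ℝ) : ℕ → ℝ
  | 0 => 1
  | k + 1 => greedyMass E u r k * if greedyMass E u r k * E k ≤ 1 then u k else r

variable {E u : ℕ → ℝ} {r : ℝ}

lemma greedyMass_pos (hu : ∀ k, 0 < u k) (hr : 0 < r) (k : ℕ) : 0 < greedyMass E u r k := by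
  induction k with
  | zero => exact one_pos
  | succ k ih =>
    rw [greedyMass]
    split_ifs
    exacts [mul_pos ih (hu k), mul_pos ih hr]

lemma greedyMass_le_max {M : ℝ} (hM : 0 ≤ M) (hu : ∀ k, 0 < u k) (huE : ∀ k, u k ≤ M * E k)
    (hr : 0 < r) (hr1 : r ≤ 1) (k : ℕ) : greedyMass E u r k ≤ max 1 M := by
  induction k with
  | zero => exact le_max_left _ _
  | succ k ih =>
    have hpos := greedyMass_pos (E := E) hu hr k
    rw [greedyMass]
    split_ifs with h
    · calc greedyMass E u r k * u k ≤ greedyMass E u r k * (M * E k) := by gcongr; exact huE k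
        _ = M * (greedyMass E u r k * E k) := by ring
        _ ≤ M := mul_le_of_le_one_right hM h
        _ ≤ max 1 M := le_max_right _ _
    · exact (mul_le_of_le_one_right hpos.le hr1).trans ih

lemma frequently_greedyMass_mul_le_one (hu : ∀ k, 0 < u k) (hr : 0 < r)
    (hE : ∀ k, E (k + 1) * r ≤ E k / 2) : ∃ᶠ k in atTop, greedyMass E u r k * E k ≤ 1 := by
  intro hev
  obtain ⟨m, hm⟩ := eventually_atTop.1 hev
  have decay (j : ℕ) : greedyMass E u r (m + j) * E (m + j) ≤
      greedyMass E u r m * E m * (1 / 2) ^ j := by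
    induction j with
    | zero => simp
    | succ j ih =>
      have hpos := greedyMass_pos (E := E) hu hr (m + j)
      rw [← add_assoc, greedyMass, if_neg (hm (m + j) (by lia)), mul_assoc, mul_comm r]
      calc _ ≤ greedyMass E u r (m + j) * (E (m + j) / 2) := by gcongr; exact hE _
        _ = greedyMass E u r (m + j) * E (m + j) * (1 / 2) := by ring
        _ ≤ greedyMass E u r m * E m * (1 / 2) ^ j * (1 / 2) := by gcongr
        _ = _ := by ring
  have hlim := (tendsto_pow_atTop_nhds_zero_of_lt_one (r := (1 / 2 : ℝ)) (by norm_num)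
    (by norm_num)).const_mul (greedyMass E u r m * E m)
  rw [mul_zero] at hlim
  obtain ⟨j, hj⟩ := (hlim.eventually (gt_mem_nhds one_pos)).exists
  exact hm (m + j) (by lia) ((decay j).trans hj.le)

end GreedyInsertion

/-! ### The lower bound -/

section LowerBound

open CFWord ExpGrowth

variable {s : ℝ}

theorem ofReal_le_dimH_of_greedy_insertion {A K M r : ℝ} {E u : ℕ → ℝ} {V : ℕ → Finset CFWord}
    {F : Finset CFWord} {q : ℕ → CFWord → ℝ} {p : CFWord → ℝ} {D : Set ℝ} (hs : 0 < s)
    (hA : 0 ≤ A) (hK : 0 ≤ K) (hM : 0 ≤ M) (hr : 0 < r) (hr1 : r ≤ 1)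
    (hV : ∀ k, IsBlockWeight s (A * E k) (u k) (V k) (q k)) (hF : IsBlockWeight s K r F p)
    (hu : ∀ k, 0 < u k) (huE : ∀ k, u k ≤ M * E k) (hE : ∀ k, E (k + 1) * r ≤ E k / 2)
    (hD : ∀ w : ℕ → CFWord, (∀ k, w k ∈ V k ∨ w k ∈ F) → (∃ᶠ k in atTop, w k ∈ V k) →
      codedPoint w ∈ D) :
    ENNReal.ofReal s ≤ dimH D := by
  set c := greedyMass E u r
  have hcpos (k : ℕ) : 0 < c k := greedyMass_pos hu hr k
  have hcM (k : ℕ) : c k ≤ max 1 M := greedyMass_le_max hM hu huE hr hr1 k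
  have hp (k : ℕ) : IsBlockWeight s (if c k * E k ≤ 1 then A * E k else K)
      (if c k * E k ≤ 1 then u k else r) (if c k * E k ≤ 1 then V k else F)
      (if c k * E k ≤ 1 then q k else p) := by
    split_ifs
    exacts [hV k, hF]
  refine ofReal_le_dimH_of_isBlockWeight hs hp rfl (fun k => rfl) (fun k => (hcpos k).le) hcM
    (C := max A (max 1 M * K)) (fun k => ?_) fun w hw => hD w (fun k => ?_) ?_
  · split_ifs with h
    · refine le_max_of_le_left ?_
      calc c k * (A * E k) = A * (c k * E k) := by ring
        _ ≤ A := mul_le_of_le_one_right hA h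
    · exact le_max_of_le_right (mul_le_mul_of_nonneg_right (hcM k) hK)
  · have := hw k
    split_ifs at this
    exacts [.inl this, .inr this]
  · refine (frequently_greedyMass_mul_le_one hu hr hE).mono fun k hk => ?_
    simpa only [c, if_pos hk] using hw k

theorem ofReal_le_dimH_of_markers {E₀ M : ℝ} {N : ℕ} {α β : ℕ → ℕ+} {E : ℕ → ℝ}
    {F : Finset CFWord} {D : Set ℝ} (hs : 0 < s) (hs1 : s ≤ 1) (hN : 2 ≤ N) (hβ : ∀ k, 2 ≤ β k)
    (hM : 0 ≤ M) (hE₀ : 1 ≤ E₀) (hE : ∀ k, E (k + 1) = E k * E₀)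
    (hα : ∀ k, (α k : ℝ) ^ s ≤ M * E k)
    (hαβ : ∀ k, (α k : ℝ) ^ (2 * s - 1) * (β k : ℝ) ^ s ≤ M * E k)
    (hmass : ∀ k, ((α k : ℝ) * β k) ^ (2 * s - 1) ≤ M * E k)
    (hF : ∀ l ∈ F, IsBlock l ∧ l.length = N + 2)
    (hsum : 2 * 4 ^ s * E₀ ≤ ∑ l ∈ F, (denom l : ℝ) ^ (-(2 * s)))
    (hD : ∀ w : ℕ → CFWord, (∀ k, IsBlock (w k) ∧ (w k).length = N + 2) →
      (∃ᶠ k in atTop, w k ∈ markerWords N (α k) (β k)) → codedPoint w ∈ D) :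
    ENNReal.ofReal s ≤ dimH D := by
  set H : ℝ := (denom (List.replicate N (1 : ℕ+)) : ℝ)
  have hH : 0 < H := Nat.cast_pos.2 (denom_pos _)
  have hFne : F.Nonempty := Finset.nonempty_of_ne_empty fun h => by
    rw [h, Finset.sum_empty] at hsum
    exact hsum.not_gt (by positivity)
  obtain ⟨K, p, hK, hfree⟩ := exists_isBlockWeight_of_length_eq (ρ := (2 * E₀)⁻¹) hs.le
    (fun l hl => (hF l hl).1) (fun l hl => (hF l hl).2) hFne <| by
      rw [inv_mul_eq_div, le_div_iff₀ (by positivity)]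
      linarith
  have hmarker (k : ℕ) : IsBlockWeight s (M * (6144 * H ^ 2) ^ s * E k)
      ((32 * H) ^ (2 * s) * ((α k : ℝ) * β k) ^ (2 * s - 1)) (markerWords N (α k) (β k))
      fun _ => 1 / ((α k : ℝ) * β k) :=
    mul_right_comm M (E k) _ ▸ isBlockWeight_markerWords hs.le hs1 hN (hβ k) (hα k) (hαβ k)
  refine ofReal_le_dimH_of_greedy_insertion
    (M := (32 * H) ^ (2 * s) * M) hs (by positivity) hK (by positivity) (by positivity)
    (inv_le_one_of_one_le₀ (by linarith)) hmarker hfree (fun k => by positivity)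
    (fun k => ?_) (fun k => ?_) fun w hw hfreq => hD w (fun k => ?_) hfreq
  · rw [mul_assoc]
    exact mul_le_mul_of_nonneg_left (hmass k) (by positivity)
  · rw [hE]
    apply le_of_eq
    field_simp
  · rcases hw k with h | h
    exacts [⟨isBlock_of_mem_markerWords hN h, length_of_mem_markerWords h⟩, hF _ h]

lemma exists_finset_isBlock_of_expGrowthSup_pos {B f : ℝ} (hB : 0 < B) (hs : 0 ≤ s)
    (h : 0 < expGrowthSup (partitionSum B f s)) (C : ℝ) :
    ∃ N ≥ 2, ∃ F : Finset CFWord, (∀ l ∈ F, IsBlock l ∧ l.length = N + 2) ∧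
      C * B ^ ((N + 2) * f) ≤ ∑ l ∈ F, (denom l : ℝ) ^ (-(2 * s)) := by
  classical
  obtain ⟨N, hlt, hN⟩ := ((frequently_lt_of_expGrowthSup_pos h
    (T := ENNReal.ofReal (C * B ^ (2 * f) * 4 ^ (2 * s))) ENNReal.ofReal_ne_top).and_eventually
    (eventually_ge_atTop 2)).exists
  rw [partitionSum, ENNReal.tsum_eq_iSup_sum, lt_iSup_iff] at hlt
  obtain ⟨A, hA⟩ := hlt
  rw [← ENNReal.ofReal_sum_of_nonneg fun i _ => by positivity, ← Finset.mul_sum] at hA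
  replace hA := (ENNReal.ofReal_lt_ofReal_iff'.1 hA).1
  have hinj : Function.Injective fun a : Fin N → ℕ+ => [1, 1] ++ List.ofFn a :=
    (List.append_right_injective _).comp List.ofFn_injective
  refine ⟨N, hN, A.image fun a => [1, 1] ++ List.ofFn a, ?_, ?_⟩
  · intro l hl
    obtain ⟨a, -, rfl⟩ := Finset.mem_image.1 hl
    exact ⟨List.prefix_append _ _, by simp⟩
  have denom_le (a : Fin N → ℕ+) : (denom ([1, 1] ++ List.ofFn a) : ℝ) ≤
      4 * denom (List.ofFn a) := by
    have := denom_append_le [1, 1] (List.ofFn a)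
    rw [show denom [1, 1] = 2 by simp] at this
    exact_mod_cast this.trans_eq (by ring)
  rw [Finset.sum_image fun a _ b _ hab => hinj hab]
  calc C * B ^ ((N + 2) * f)
      = C * B ^ (2 * f) * 4 ^ (2 * s) * B ^ (N * f) * 4 ^ (-(2 * s)) := by
        rw [Real.rpow_neg zero_le_four, add_mul, Real.rpow_add hB]
        field_simp
    _ ≤ B ^ (-(N : ℝ) * f) * (∑ a ∈ A, (denom (List.ofFn a) : ℝ) ^ (-(2 * s))) * B ^ (N * f) *
          4 ^ (-(2 * s)) := by gcongr
    _ = ∑ a ∈ A, (4 * denom (List.ofFn a) : ℝ) ^ (-(2 * s)) := by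
        simp_rw [Real.mul_rpow zero_le_four (Nat.cast_nonneg _)]
        rw [neg_mul, Real.rpow_neg hB.le, ← Finset.mul_sum]
        field_simp
    _ ≤ _ := Finset.sum_le_sum fun a _ =>
        Real.rpow_le_rpow_of_nonpos (by exact_mod_cast denom_pos _) (denom_le a) (by linarith)

end LowerBound

section DimensionFormula

open CFWord ExpGrowth
open scoped ENNReal Topology

variable {t₀ t₁ B s κ δ : ℝ} {N : ℕ} {w : ℕ → CFWord}

lemma pq_codedPoint_of_eq_markerWord (hw : ∀ k, IsBlock (w k)) {k : ℕ} {a b : ℕ+}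
    (h : w k = markerWord N a b) :
    pq (codedPoint w) ((prefixWord w k).length + N + 1) = a ∧
      pq (codedPoint w) ((prefixWord w k).length + N + 1 + 1) = b := by
  have hy := codedPoint_mem_Ioo fun i => hw (k + 1 + i)
  have ha : prefixWord w (k + 1) = (prefixWord w k ++ List.replicate N 1) ++ a :: [b] := by
    simp [prefixWord_succ, h, markerWord]
  have hb : prefixWord w (k + 1) = (prefixWord w k ++ List.replicate N 1 ++ [a]) ++ b :: [] := by
    simp [prefixWord_succ, h, markerWord]
  rw [codedPoint_eq_branch hw (k + 1)]
  constructor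
  · have hpq := pq_branch (prefixWord w k ++ List.replicate N 1) [b] a hy
    rwa [← ha, List.length_append, List.length_replicate] at hpq
  · have hpq := pq_branch (prefixWord w k ++ List.replicate N 1 ++ [a]) [] b hy
    rwa [← hb, List.length_append, List.length_append, List.length_replicate,
      List.length_singleton] at hpq

lemma length_prefixWord {L : ℕ} (h : ∀ k, (w k).length = L) (k : ℕ) :
    (prefixWord w k).length = k * L := by
  simp [prefixWord, List.length_flatMap, h]

lemma codedPoint_mem_weightedProductSet (ht₀ : 0 ≤ t₀) (ht₁ : 0 ≤ t₁) (hB : 1 ≤ B)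
    (hκδ : κ * t₀ + δ * t₁ = 1) {α β : ℕ → ℕ+}
    (hα : ∀ k : ℕ, B ^ (κ * ((N + 2) * (k + 1))) ≤ α k)
    (hβ : ∀ k : ℕ, B ^ (δ * ((N + 2) * (k + 1))) ≤ β k)
    (hw : ∀ k, IsBlock (w k) ∧ (w k).length = N + 2)
    (hfreq : ∃ᶠ k in atTop, w k ∈ markerWords N (α k) (β k)) :
    codedPoint w ∈ weightedProductSet t₀ t₁ B := by
  have hblock k := (hw k).1
  refine ⟨codedPoint_mem_Ioo hblock, irrational_codedPoint hblock,
    Nat.frequently_atTop_iff_infinite.1 (frequently_atTop.2 fun m => ?_)⟩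
  obtain ⟨k, hk, hmem⟩ := frequently_atTop.1 hfreq m
  obtain ⟨a, ha, b, hb, hab⟩ := mem_markerWords.1 hmem
  obtain ⟨hpa, hpb⟩ := pq_codedPoint_of_eq_markerWord hblock hab.symm
  rw [length_prefixWord (fun k => (hw k).2)] at hpa hpb
  refine ⟨k * (N + 2) + N + 1, by nlinarith, ?_⟩
  have hα_le : B ^ (κ * ((N + 2) * (k + 1))) ≤ a :=
    (hα k).trans (by exact_mod_cast (Finset.mem_Ico.1 ha).1)
  have hβ_le : B ^ (δ * ((N + 2) * (k + 1))) ≤ b :=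
    (hβ k).trans (by exact_mod_cast (Finset.mem_Ico.1 hb).1)
  rw [hpa, hpb]
  calc B ^ (k * (N + 2) + N + 1) ≤ B ^ ((N + 2) * (k + 1)) :=
        pow_le_pow_right₀ hB (by nlinarith)
    _ = B ^ (((N : ℝ) + 2) * (k + 1) * (κ * t₀ + δ * t₁)) := by
        rw [hκδ, mul_one, ← Real.rpow_natCast]
        push_cast
        rfl
    _ = (B ^ (κ * ((N + 2) * (k + 1)))) ^ t₀ * (B ^ (δ * ((N + 2) * (k + 1)))) ^ t₁ := by
        rw [← Real.rpow_mul (by positivity), ← Real.rpow_mul (by positivity),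
          ← Real.rpow_add (by positivity)]
        ring_nf
    _ ≤ (a : ℝ) ^ t₀ * (b : ℝ) ^ t₁ := by gcongr

lemma exists_pnat_rpow_le_two_mul {A : ℝ} (hA : 1 ≤ A) :
    ∃ n : ℕ+, A ≤ n ∧ ∀ e : ℝ, e ≤ 1 → (n : ℝ) ^ e ≤ 2 * A ^ e := by
  have hA₀ : 0 < A := one_pos.trans_le hA
  have hle : A ≤ ⌈A⌉₊ := Nat.le_ceil A
  refine ⟨⟨⌈A⌉₊, Nat.ceil_pos.2 hA₀⟩, hle, fun e he => ?_⟩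
  rw [PNat.mk_coe]
  have hpow : 0 < A ^ e := by positivity
  rcases le_total 0 e with h0 | h0
  · have hceil : (⌈A⌉₊ : ℝ) ≤ 2 * A := by linarith [Nat.ceil_lt_add_one hA₀.le]
    have h2 : (2 : ℝ) ^ e ≤ 2 := Real.rpow_le_self_of_one_le one_le_two he
    calc (⌈A⌉₊ : ℝ) ^ e ≤ (2 * A) ^ e := by gcongr
      _ = 2 ^ e * A ^ e := Real.mul_rpow zero_le_two hA₀.le
      _ ≤ 2 * A ^ e := by gcongr
  · linarith [Real.rpow_le_rpow_of_nonpos hA₀ hle h0]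

theorem ofReal_le_dimH_weightedProductSet (ht₀ : 0 < t₀) (ht₁ : 0 < t₁) (hB : 1 < B)
    (hs : 0 < s) (hs1 : s < 1)
    (h : 0 < expGrowthSup (partitionSum B (fWeighted t₀ t₁ s) s)) :
    ENNReal.ofReal s ≤ dimH (weightedProductSet t₀ t₁ B) := by
  have hB₀ : 0 < B := by linarith
  obtain ⟨κ, δ, hκ, hδ, hκδ, hf₁, hf₂⟩ := exists_marker_exponents ht₀ ht₁ hs hs1
  obtain ⟨N, hN, F, hF, hsum⟩ := exists_finset_isBlock_of_expGrowthSup_pos hB₀ hs.le h (2 * 4 ^ s)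
  have hf₀ := fWeighted_nonneg ht₀ ht₁ hs.le
  set f := fWeighted t₀ t₁ s
  have approx {γ : ℝ} (hγ : 0 ≤ γ) (k : ℕ) :=
    exists_pnat_rpow_le_two_mul
      (Real.one_le_rpow hB.le (by positivity : 0 ≤ γ * ((N + 2) * (k + 1))))
  choose α hα_ge hα_le using approx hκ
  choose β hβ_ge hβ_le using approx hδ.le
  have rpow_mul_le (k : ℕ) {e e' : ℝ} (he : e ≤ 1) (he' : e' ≤ 1)
      (hle : e * κ + e' * δ ≤ f) :
      (α k : ℝ) ^ e * (β k : ℝ) ^ e' ≤ 4 * B ^ ((N + 2) * (k + 1) * f) := by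
    calc _ ≤ 2 * (B ^ (κ * ((N + 2) * (k + 1)))) ^ e * (2 * (B ^ (δ * ((N + 2) * (k + 1)))) ^ e') :=
          mul_le_mul (hα_le k e he) (hβ_le k e' he') (by positivity) (by positivity)
      _ = 4 * B ^ ((N + 2) * (k + 1) * (e * κ + e' * δ)) := by
          rw [mul_mul_mul_comm, ← Real.rpow_mul hB₀.le, ← Real.rpow_mul hB₀.le,
            ← Real.rpow_add hB₀]
          ring_nf
      _ ≤ _ := by gcongr; exact hB.le
  refine ofReal_le_dimH_of_markers (M := 4) (E₀ := B ^ ((N + 2) * f))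
    (E := fun k => B ^ ((N + 2) * (k + 1) * f)) hs hs1.le hN (fun k => ?_) zero_le_four
    (Real.one_le_rpow hB.le (by positivity)) (fun k => ?_) (fun k => ?_) (fun k => ?_) (fun k => ?_)
    hF hsum fun w hw hfreq => codedPoint_mem_weightedProductSet ht₀.le ht₁.le hB.le hκδ
      hα_ge hβ_ge hw hfreq
  · have : 1 < (β k : ℝ) := (Real.one_lt_rpow hB (by positivity)).trans_le (hβ_ge k)
    exact_mod_cast this
  · rw [← Real.rpow_add hB₀]
    push_cast
    ring_nf
  · simpa using rpow_mul_le k (e := s) (e' := 0) hs1.le zero_le_one (by linarith)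
  · exact rpow_mul_le k (by linarith) hs1.le hf₂
  · rw [Real.mul_rpow (by positivity) (by positivity)]
    exact rpow_mul_le k (by linarith) (by linarith) (by nlinarith)

lemma eq_ofReal_sInf {S : Set ℝ} {d : ℝ≥0∞} (hS : S ⊆ Icc 0 1) (h1 : 1 ∈ S) (hd : d ≤ 1)
    (hle : ∀ s ∈ S, ∀ s', s < s' → s' < 1 → d ≤ ENNReal.ofReal s')
    (hge : ∀ s ∈ Ioo 0 1, s ∉ S → ENNReal.ofReal s ≤ d) : d = ENNReal.ofReal (sInf S) := by
  have hbdd : BddBelow S := ⟨0, fun s hs => (hS hs).1⟩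
  have hInf₀ : 0 ≤ sInf S := le_csInf ⟨1, h1⟩ fun s hs => (hS hs).1
  have hInf₁ : sInf S ≤ 1 := csInf_le hbdd h1
  have hcont : Tendsto ENNReal.ofReal (𝓝 (sInf S)) (𝓝 (ENNReal.ofReal (sInf S))) :=
    ENNReal.continuous_ofReal.tendsto _
  apply le_antisymm
  · rcases hInf₁.eq_or_lt with heq | hlt
    · simpa [heq] using hd
    · refine ge_of_tendsto (hcont.mono_left (nhdsWithin_le_nhds (s := Ioi (sInf S)))) ?_
      filter_upwards [Ioo_mem_nhdsGT hlt] with s' hs'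
      obtain ⟨s, hs, hss'⟩ := exists_lt_of_csInf_lt ⟨1, h1⟩ hs'.1
      exact hle s hs s' hss' hs'.2
  · rcases hInf₀.eq_or_lt with heq | hlt
    · simp [← heq]
    · refine le_of_tendsto (hcont.mono_left (nhdsWithin_le_nhds (s := Iio (sInf S)))) ?_
      filter_upwards [Ioo_mem_nhdsLT hlt] with s hs
      exact hge s ⟨hs.1, hs.2.trans_le hInf₁⟩ (notMem_of_lt_csInf hs.2 hbdd)

end DimensionFormula

theorem bakhtawar_hussain_kleinbock_wang (t₀ t₁ B : ℝ)
    (ht₀ : 0 < t₀) (ht₁ : 0 < t₁) (hB : 1 < B) :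
    dimH {x : ℝ | x ∈ Set.Ioo (0 : ℝ) 1 ∧ Irrational x ∧
      {n : ℕ | B ^ n ≤ (pq x n : ℝ) ^ t₀ * (pq x (n + 1) : ℝ) ^ t₁}.Infinite} =
    ENNReal.ofReal (sInf {s : ℝ | 0 ≤ s ∧ s ≤ 1 ∧
      Filter.atTop.limsup (fun n : ℕ =>
        (((n : ℝ)⁻¹ : ℝ) : EReal) * ENNReal.log (∑' a : Fin n → ℕ+,
          ENNReal.ofReal (B ^ (-(n : ℝ) * fWeighted t₀ t₁ s) *
            ((contQ n fun i => (a i : ℕ)) : ℝ) ^ (-(2 * s))))) ≤ 0}) := by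
  simp only [limsup_inv_mul_log_eq_expGrowthSup_partitionSum]
  refine eq_ofReal_sInf (fun s hs => ⟨hs.1, hs.2.1⟩) ⟨zero_le_one, le_rfl, ?_⟩ ?_ ?_ ?_
  · exact expGrowthSup_partitionSum_one_nonpos hB.le (fWeighted_nonneg ht₀ ht₁ zero_le_one)
  · exact (dimH_mono (subset_univ _)).trans_eq Real.dimH_univ
  · exact fun s hs s' hss' hs' => dimH_weightedProductSet_le ht₀ ht₁ hB hs.1 hss' hs' hs.2.2
  · intro s hs hnot
    have hpos : 0 < ExpGrowth.expGrowthSup (partitionSum B (fWeighted t₀ t₁ s) s) :=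
      not_le.1 fun hle => hnot ⟨hs.1.le, hs.2.le, hle⟩
    exact ofReal_le_dimH_weightedProductSet ht₀ ht₁ hB hs.1 hs.2 hpos
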